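/- arXiv:1709.00748 — 2 statements merged into one kernel-verified Lean document; each statement's English description precedes it below -/
import Mathlib

section
/- Let n ≥ 2, k ≥ 1, let η ∈ ℝⁿ ∖ {0} and 𝐫 = (r₁,…,r_k) ∈ (0,∞)^k, and let F : (ℝⁿ)^k × ℝⁿ → ℂ be a Schwartz function of the variables (ξ₁,…,ξ_k,η). Then ∫_{Γ_{r₁}(η)} ⋯ ∫_{Γ_{r_k}(η)} |F(ξ₁,…,ξ_k,η)|² dσ_{r₁η}(ξ₁)⋯dσ_{r_kη}(ξ_k) ≤ C ∑ ∫_{ℝⁿ}⋯∫_{ℝⁿ} |∂_{ξ₁}^{α₁}⋯∂_{ξ_k}^{α_k} F(ξ₁,…,ξ_k,η)|² dξ₁⋯dξ_k, where the sum is over all tuples of multi-indices (α₁,…,α_k) with 0 ≤ |α_i| ≤ 1 for each i, and the constant C depends only on n and k (in particular it is independent of η and of 𝐫). -/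
open MeasureTheory
open scoped ENNReal

noncomputable section

abbrev Euc (n : ℕ) := EuclideanSpace ℝ (Fin n)

/-- The Ewald sphere measure `σ_{rη}`: the `(n-1)`-dimensional Hausdorff measure restricted
to `Γ_r(η) = {ξ : |ξ - η/2| = r|η|/2}`. -/
def ewaldM (n : ℕ) (r : ℝ) (η : Euc n) : Measure (Euc n) :=
  (MeasureTheory.Measure.hausdorffMeasure ((n : ℝ) - 1)).restrict
    (Metric.sphere ((2 : ℝ)⁻¹ • η) (r * ‖η‖ / 2))

/-- Iterated directional derivative along a list of directions. -/
def dirDerivList {V : Type*} [NormedAddCommGroup V] [NormedSpace ℝ V]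
    (vs : List V) (F : V → ℂ) : V → ℂ :=
  vs.foldr (fun v G x => fderiv ℝ G x v) F

/-- To a choice `a : Fin k → Option (Fin n)` (for each slot `i`, either no derivative or a
single partial derivative in the `m`-th coordinate of `ξᵢ`) we associate the corresponding
list of directions in `(ℝⁿ)ᵏ × ℝⁿ`. -/
def dirsOf (n k : ℕ) (a : Fin k → Option (Fin n)) :
    List ((Fin k → Euc n) × Euc n) :=
  (List.finRange k).filterMap fun i =>
    (a i).map fun m => (Pi.single i (EuclideanSpace.single m (1 : ℝ)), 0)

open scoped NNReal MeasureTheory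

/-!
Split the sphere into caps on which one coordinate of the outward normal has modulus at least
`1 / n`. On such a cap the projection forgetting that coordinate is injective with Lipschitz
inverse, the Lipschitz constant depending only on the dimension. Integrating the derivative of
`‖g‖²` along coordinate lines bounds `‖g x‖²` by the integral of `‖g‖² + ‖∂ₘg‖²` over the line
through `x`, and integrating this over the cap, whose projected Hausdorff measure is dominated by
Lebesgue measure on the hyperplane, gives a trace inequality `H¹(ℝⁿ) → L²(sphere)` with a constant
independent of centre and radius. Finally the `k` sphere measures are exchanged for Lebesgue measure
one variable at a time, each exchange adding at most one derivative in that variable.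
-/

/-! ### Traces on points of lines -/

section Line

variable {E : Type*} [NormedAddCommGroup E] [InnerProductSpace ℝ E]

lemma enorm_two_mul_inner_le (u v : E) : ‖2 * inner ℝ u v‖ₑ ≤ ‖u‖ₑ ^ 2 + ‖v‖ₑ ^ 2 := by
  have h : ‖2 * inner ℝ u v‖ ≤ ‖u‖ ^ 2 + ‖v‖ ^ 2 := by
    rw [norm_mul, Real.norm_ofNat]
    nlinarith [norm_inner_le_norm (𝕜 := ℝ) u v, two_mul_le_add_sq ‖u‖ ‖v‖]
  simpa only [← ofReal_norm, ENNReal.ofReal_add, ENNReal.ofReal_pow, norm_nonneg, pow_nonneg]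
    using ENNReal.ofReal_le_ofReal h

lemma enorm_sq_le_lintegral_add_deriv {h : ℝ → E} (hh : ContDiff ℝ 1 h) (t₀ : ℝ) :
    ‖h t₀‖ₑ ^ 2 ≤ ∫⁻ t, (‖h t‖ₑ ^ 2 + ‖deriv h t‖ₑ ^ 2) := by
  rcases eq_top_or_lt_top (∫⁻ t, (‖h t‖ₑ ^ 2 + ‖deriv h t‖ₑ ^ 2)) with htop | hfin
  · exact htop ▸ le_top
  have hcont : Continuous fun t ↦ 2 * inner ℝ (h t) (deriv h t) :=
    continuous_const.mul (hh.continuous.inner (hh.continuous_deriv le_rfl))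
  have hderiv : ∀ t, HasDerivAt (fun t ↦ ‖h t‖ ^ 2) (2 * inner ℝ (h t) (deriv h t)) t :=
    fun t ↦ (hh.differentiable one_ne_zero t).hasDerivAt.norm_sq
  have hint' : Integrable fun t ↦ 2 * inner ℝ (h t) (deriv h t) :=
    ⟨hcont.aestronglyMeasurable,
      (lintegral_mono fun t ↦ enorm_two_mul_inner_le (h t) (deriv h t)).trans_lt hfin⟩
  have hint : Integrable fun t ↦ ‖h t‖ ^ 2 := by
    refine ⟨(hh.continuous.norm.pow 2).aestronglyMeasurable,
      (lintegral_mono fun t ↦ ?_).trans_lt hfin⟩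
    rw [enorm_pow, enorm_norm]
    exact le_self_add
  have hlim := tendsto_zero_of_hasDerivAt_of_integrableOn_Iic (a := t₀) (fun t _ ↦ hderiv t)
    hint'.integrableOn hint.integrableOn
  calc ‖h t₀‖ₑ ^ 2 = ‖‖h t₀‖ ^ 2‖ₑ := by rw [enorm_pow, enorm_norm]
    _ = ‖∫ t in Set.Iic t₀, 2 * inner ℝ (h t) (deriv h t)‖ₑ := by
      rw [integral_Iic_of_hasDerivAt_of_tendsto' (fun t _ ↦ hderiv t) hint'.integrableOn hlim,
        sub_zero]
    _ ≤ ∫⁻ t in Set.Iic t₀, ‖2 * inner ℝ (h t) (deriv h t)‖ₑ :=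
      enorm_integral_le_lintegral_enorm _
    _ ≤ ∫⁻ t, ‖2 * inner ℝ (h t) (deriv h t)‖ₑ := setLIntegral_le_lintegral _ _
    _ ≤ ∫⁻ t, (‖h t‖ₑ ^ 2 + ‖deriv h t‖ₑ ^ 2) :=
      lintegral_mono fun t ↦ enorm_two_mul_inner_le (h t) (deriv h t)

lemma enorm_sq_le_lintegral_line {V : Type*} [NormedAddCommGroup V] [NormedSpace ℝ V] {g : V → E}
    (hg : ContDiff ℝ 1 g) (x v : V) :
    ‖g x‖ₑ ^ 2 ≤ ∫⁻ t : ℝ, (‖g (x + t • v)‖ₑ ^ 2 + ‖fderiv ℝ g (x + t • v) v‖ₑ ^ 2) := by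
  have hline : ContDiff ℝ 1 fun t : ℝ ↦ g (x + t • v) := by fun_prop
  have hderiv : ∀ t : ℝ, deriv (fun t : ℝ ↦ g (x + t • v)) t = fderiv ℝ g (x + t • v) v := by
    intro t
    have hpath : HasDerivAt (fun t : ℝ ↦ x + t • v) v t := by
      simpa using ((hasDerivAt_id t).smul_const v).const_add x
    exact ((hg.differentiable one_ne_zero _).hasFDerivAt.comp_hasDerivAt t hpath).deriv
  simpa [hderiv] using enorm_sq_le_lintegral_add_deriv hline 0

end Line

/-! ### Hausdorff measure on Lipschitz graphs -/

lemma map_restrict_hausdorffMeasure_le {X Y : Type*} [EMetricSpace X] [MeasurableSpace X]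
    [BorelSpace X] [EMetricSpace Y] [MeasurableSpace Y] [BorelSpace Y] {p : X → Y}
    (hp : Measurable p) {T : Set X} {K : ℝ≥0} (hT : AntilipschitzWith K fun x : T ↦ p x)
    {s : ℝ} (hs : 0 ≤ s) : (μH[s].restrict T).map p ≤ (K : ℝ≥0∞) ^ s • μH[s] := by
  refine Measure.le_iff.2 fun A hA ↦ ?_
  rw [Measure.map_apply hp hA, Measure.restrict_apply (hp hA), Set.inter_comm,
    ← Subtype.image_preimage_coe, isometry_subtype_coe.hausdorffMeasure_image (Or.inl hs)]
  exact hT.hausdorffMeasure_preimage_le hs A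

section DropCoord

variable {d : ℕ} (m : Fin (d + 1))

/-- The coordinate projection `ℝᵈ⁺¹ → ℝᵈ` that forgets the `m`-th coordinate. The target carries
the sup norm, for which Mathlib identifies `d`-dimensional Hausdorff and Lebesgue measure. -/
def dropCoord (x : Euc (d + 1)) : Fin d → ℝ := m.removeNth x.ofLp

lemma continuous_dropCoord : Continuous (dropCoord m) := by
  unfold dropCoord Fin.removeNth
  fun_prop

lemma abs_apply_sub_apply_le_dist_dropCoord (x y : Euc (d + 1)) (j : Fin d) :
    |x (m.succAbove j) - y (m.succAbove j)| ≤ dist (dropCoord m x) (dropCoord m y) :=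
  dist_le_pi_dist (dropCoord m x) (dropCoord m y) j

lemma add_smul_single_eq_toLp_insertNth (x : Euc (d + 1)) (t : ℝ) :
    x + t • EuclideanSpace.single m 1 = WithLp.toLp 2 (m.insertNth (x m + t) (dropCoord m x)) := by
  ext j
  refine Fin.succAboveCases m ?_ (fun j ↦ ?_) j <;> simp [dropCoord, Fin.removeNth]

lemma lintegral_eq_lintegral_lintegral_insertNth {G : Euc (d + 1) → ℝ≥0∞} (hG : Measurable G) :
    ∫⁻ y, G y = ∫⁻ x : Fin d → ℝ, ∫⁻ t : ℝ, G (WithLp.toLp 2 (m.insertNth t x)) := by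
  have htoLp := PiLp.volume_preserving_toLp (Fin (d + 1))
  have hinsert := (volume_preserving_piFinSuccAbove (fun _ : Fin (d + 1) ↦ ℝ) m).symm
  have hG' : Measurable fun y : Fin (d + 1) → ℝ ↦ G (WithLp.toLp 2 y) := hG.comp htoLp.measurable
  rw [← htoLp.lintegral_comp hG, ← hinsert.lintegral_comp hG', Measure.volume_eq_prod]
  exact lintegral_prod_symm' _ (hG'.comp hinsert.measurable)

lemma measurable_lintegral_insertNth {G : Euc (d + 1) → ℝ≥0∞} (hG : Measurable G) :
    Measurable fun x : Fin d → ℝ ↦ ∫⁻ t : ℝ, G (WithLp.toLp 2 (m.insertNth t x)) := by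
  have hinsert : Continuous fun p : (Fin d → ℝ) × ℝ ↦ (m.insertNth p.2 p.1 : Fin (d + 1) → ℝ) :=
    Continuous.finInsertNth m continuous_snd continuous_fst
  exact (hG.comp ((PiLp.continuous_toLp 2 _).comp hinsert).measurable).lintegral_prod_right'

lemma setLIntegral_comp_dropCoord_le {T : Set (Euc (d + 1))} {K : ℝ≥0}
    (hT : AntilipschitzWith K fun x : T ↦ dropCoord m x) {f : (Fin d → ℝ) → ℝ≥0∞}
    (hf : Measurable f) :
    ∫⁻ x in T, f (dropCoord m x) ∂μH[d] ≤ K ^ d * ∫⁻ z, f z := by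
  have hdrop := (continuous_dropCoord m).measurable
  have hvol : (μH[d] : Measure (Fin d → ℝ)) = volume := by
    simpa using hausdorffMeasure_pi_real (ι := Fin d)
  have hmap := map_restrict_hausdorffMeasure_le hdrop hT d.cast_nonneg
  rw [hvol, ENNReal.rpow_natCast] at hmap
  calc ∫⁻ x in T, f (dropCoord m x) ∂μH[d]
      = ∫⁻ z, f z ∂(μH[d].restrict T).map (dropCoord m) := (lintegral_map hf hdrop).symm
    _ ≤ ∫⁻ z, f z ∂((K : ℝ≥0∞) ^ d • volume) := lintegral_mono' hmap le_rfl
    _ = K ^ d * ∫⁻ z, f z := lintegral_smul_measure _ _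

lemma setLIntegral_enorm_sq_le_of_antilipschitzWith_dropCoord
    {E : Type*} [NormedAddCommGroup E] [InnerProductSpace ℝ E] {T : Set (Euc (d + 1))} {K : ℝ≥0}
    (hT : AntilipschitzWith K fun x : T ↦ dropCoord m x) {g : Euc (d + 1) → E}
    (hg : ContDiff ℝ 1 g) :
    ∫⁻ x in T, ‖g x‖ₑ ^ 2 ∂μH[d] ≤
      K ^ d * ((∫⁻ x, ‖g x‖ₑ ^ 2) + ∫⁻ x, ‖fderiv ℝ g x (EuclideanSpace.single m 1)‖ₑ ^ 2) := by
  set e : Euc (d + 1) := EuclideanSpace.single m 1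
  set G : Euc (d + 1) → ℝ≥0∞ := fun x ↦ ‖g x‖ₑ ^ 2 + ‖fderiv ℝ g x e‖ₑ ^ 2
  have hg_meas : Measurable fun x ↦ ‖g x‖ₑ ^ 2 := hg.continuous.enorm.measurable.pow_const 2
  have hG : Measurable G := hg_meas.add <|
    ((hg.continuous_fderiv one_ne_zero).clm_apply continuous_const).enorm.measurable.pow_const 2
  set fibre : (Fin d → ℝ) → ℝ≥0∞ := fun z ↦ ∫⁻ t, G (WithLp.toLp 2 (m.insertNth t z))
  have hpointwise : ∀ x, ‖g x‖ₑ ^ 2 ≤ fibre (dropCoord m x) := fun x ↦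
    calc ‖g x‖ₑ ^ 2 ≤ ∫⁻ t : ℝ, G (x + t • e) := enorm_sq_le_lintegral_line hg x e
      _ = ∫⁻ t : ℝ, G (WithLp.toLp 2 (m.insertNth (x m + t) (dropCoord m x))) := by
        simp only [e, add_smul_single_eq_toLp_insertNth]
      _ = fibre (dropCoord m x) :=
        lintegral_add_left_eq_self
          (fun t ↦ G (WithLp.toLp 2 (m.insertNth t (dropCoord m x)))) (x m)
  calc ∫⁻ x in T, ‖g x‖ₑ ^ 2 ∂μH[d]
      ≤ ∫⁻ x in T, fibre (dropCoord m x) ∂μH[d] := lintegral_mono hpointwise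
    _ ≤ K ^ d * ∫⁻ z, fibre z :=
      setLIntegral_comp_dropCoord_le m hT (measurable_lintegral_insertNth m hG)
    _ = K ^ d * ∫⁻ x, G x := by rw [lintegral_eq_lintegral_lintegral_insertNth m hG]
    _ = _ := by rw [lintegral_add_left hg_meas]

end DropCoord

/-! ### Spherical caps -/

lemma norm_le_sum_abs_apply {n : ℕ} (x : Euc n) : ‖x‖ ≤ ∑ i, |x i| := by
  have hsum : 0 ≤ ∑ i, |x i| := by positivity
  rw [← sq_le_sq₀ (norm_nonneg x) hsum, EuclideanSpace.norm_sq_eq]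
  exact Finset.sum_sq_le_sq_sum_of_nonneg fun i _ ↦ abs_nonneg (x i)

section Cap

variable {d : ℕ}

/-- For a sign `s = ±1`, the part of the sphere of centre `c` and radius `ρ` on which the `m`-th
coordinate of `s • (x - c)` is at least `ρ / (d + 1)`; it is a Lipschitz graph over the remaining
coordinates. -/
def sphericalCap (c : Euc (d + 1)) (ρ : ℝ) (m : Fin (d + 1)) (s : ℝ) : Set (Euc (d + 1)) :=
  {x | x ∈ Metric.sphere c ρ ∧ ρ ≤ (d + 1) * (s * (x - c) m)}

lemma sphere_subset_iUnion_sphericalCap (c : Euc (d + 1)) (ρ : ℝ) :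
    Metric.sphere c ρ ⊆ ⋃ m, (sphericalCap c ρ m 1 ∪ sphericalCap c ρ m (-1)) := by
  intro x hx
  have hsum : ∑ _m : Fin (d + 1), ρ / (d + 1) ≤ ∑ m, |(x - c) m| := by
    have h := norm_le_sum_abs_apply (x - c)
    rw [mem_sphere_iff_norm.1 hx] at h
    simpa [mul_div_cancel₀ ρ (Nat.cast_add_one_ne_zero (R := ℝ) d)] using h
  obtain ⟨m, -, hm⟩ := Finset.exists_le_of_sum_le Finset.univ_nonempty hsum
  rw [div_le_iff₀' (by positivity)] at hm
  refine Set.mem_iUnion.2 ⟨m, ?_⟩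
  rcases abs_choice ((x - c) m) with habs | habs <;> rw [habs] at hm
  · exact Or.inl ⟨hx, by simpa using hm⟩
  · exact Or.inr ⟨hx, by simpa using hm⟩

/-- Two vectors of equal norm satisfy `⟪u - v, u + v⟫ = 0`, which expresses the product of the
`m`-th coordinates through the remaining ones. -/
lemma abs_sub_mul_abs_add_le_of_norm_eq {u v : Euc (d + 1)} (huv : ‖u‖ = ‖v‖) (m : Fin (d + 1)) :
    |u m - v m| * |u m + v m| ≤ d * (dist (dropCoord m u) (dropCoord m v) * (2 * ‖u‖)) := by
  have horth : (u m - v m) * (u m + v m) = -∑ j : Fin d, (u (m.succAbove j) - v (m.succAbove j)) *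
      (u (m.succAbove j) + v (m.succAbove j)) := by
    have h : ‖u‖ ^ 2 = ‖v‖ ^ 2 := by rw [huv]
    simp only [EuclideanSpace.real_norm_sq_eq, Fin.sum_univ_succAbove _ m] at h
    have hsq : ∀ a b : ℝ, (a - b) * (a + b) = a ^ 2 - b ^ 2 := fun a b ↦ by ring
    simp only [hsq, Finset.sum_sub_distrib]
    linarith
  have hadd : ∀ j, |u j + v j| ≤ 2 * ‖u‖ := fun j ↦
    calc |u j + v j| ≤ |u j| + |v j| := abs_add_le _ _
      _ ≤ ‖u‖ + ‖v‖ := add_le_add (PiLp.norm_apply_le u j) (PiLp.norm_apply_le v j)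
      _ = 2 * ‖u‖ := by rw [← huv, two_mul]
  calc |u m - v m| * |u m + v m|
      ≤ ∑ j : Fin d, |(u (m.succAbove j) - v (m.succAbove j)) *
          (u (m.succAbove j) + v (m.succAbove j))| := by
        rw [← abs_mul, horth, abs_neg]
        exact Finset.abs_sum_le_sum_abs _ _
    _ ≤ ∑ _j : Fin d, dist (dropCoord m u) (dropCoord m v) * (2 * ‖u‖) := by
        gcongr with j
        rw [abs_mul]
        exact mul_le_mul (abs_apply_sub_apply_le_dist_dropCoord m u v j) (hadd _) (abs_nonneg _)
          dist_nonneg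
    _ = d * (dist (dropCoord m u) (dropCoord m v) * (2 * ‖u‖)) := by simp

lemma abs_apply_sub_apply_le_of_mem_sphericalCap {c : Euc (d + 1)} {ρ : ℝ} {m : Fin (d + 1)}
    {s : ℝ} (hs : |s| = 1) {x y : Euc (d + 1)} (hx : x ∈ sphericalCap c ρ m s)
    (hy : y ∈ sphericalCap c ρ m s) :
    |x m - y m| ≤ d * (d + 1) * dist (dropCoord m x) (dropCoord m y) := by
  obtain ⟨hxS, hxm⟩ := hx
  obtain ⟨hyS, hym⟩ := hy
  set D := dist (dropCoord m x) (dropCoord m y)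
  have hD : dist (dropCoord m (x - c)) (dropCoord m (y - c)) = D :=
    dist_sub_right (dropCoord m x) (dropCoord m y) (dropCoord m c)
  rw [mem_sphere_iff_norm] at hxS hyS
  have hprod := abs_sub_mul_abs_add_le_of_norm_eq (hxS.trans hyS.symm) m
  rw [hD, hxS, show (x - c) m - (y - c) m = x m - y m by simp] at hprod
  have hlower : 2 * ρ ≤ (d + 1) * |(x - c) m + (y - c) m| := by
    have h : s * ((x - c) m + (y - c) m) ≤ |(x - c) m + (y - c) m| := by
      simpa [abs_mul, hs] using le_abs_self (s * ((x - c) m + (y - c) m))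
    nlinarith
  rcases (hxS ▸ norm_nonneg (x - c) : 0 ≤ ρ).eq_or_lt with rfl | hρ
  · have hxy : x = y := by
      rw [norm_eq_zero, sub_eq_zero] at hxS hyS
      rw [hxS, hyS]
    simp only [hxy, sub_self, abs_zero]
    positivity
  · refine le_of_mul_le_mul_right ?_ (by positivity : 0 < 2 * ρ)
    calc |x m - y m| * (2 * ρ) ≤ |x m - y m| * ((d + 1) * |(x - c) m + (y - c) m|) := by gcongr
      _ = (d + 1) * (|x m - y m| * |(x - c) m + (y - c) m|) := by ring
      _ ≤ (d + 1) * (d * (D * (2 * ρ))) := by gcongr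
      _ = d * (d + 1) * D * (2 * ρ) := by ring

lemma antilipschitzWith_dropCoord_sphericalCap (c : Euc (d + 1)) (ρ : ℝ) (m : Fin (d + 1))
    {s : ℝ} (hs : |s| = 1) :
    AntilipschitzWith ((d + 1) ^ 2) fun x : sphericalCap c ρ m s ↦ dropCoord m x := by
  refine AntilipschitzWith.of_le_mul_dist fun x y ↦ ?_
  obtain ⟨x, hx⟩ := x
  obtain ⟨y, hy⟩ := y
  set D := dist (dropCoord m x) (dropCoord m y)
  calc dist x y ≤ ∑ j, |x j - y j| := by
        rw [dist_eq_norm]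
        exact norm_le_sum_abs_apply (x - y)
    _ = |x m - y m| + ∑ j : Fin d, |x (m.succAbove j) - y (m.succAbove j)| :=
        Fin.sum_univ_succAbove _ m
    _ ≤ d * (d + 1) * D + ∑ _j : Fin d, D := by
        gcongr with j
        · exact abs_apply_sub_apply_le_of_mem_sphericalCap hs hx hy
        · exact abs_apply_sub_apply_le_dist_dropCoord m x y j
    _ ≤ (d + 1) ^ 2 * D := by
        have hD : 0 ≤ D := dist_nonneg
        simp only [Finset.sum_const, Finset.card_univ, Fintype.card_fin, nsmul_eq_mul]
        linarith

end Cap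

/-! ### Trace inequalities -/

section Trace

variable {n : ℕ}

/-- The squared `H¹(ℝⁿ)` norm `∫ |g|² + ∑ₘ ∫ |∂ₘg|²`, possibly infinite. -/
def sobolevNormSq (g : Euc n → ℂ) : ℝ≥0∞ :=
  (∫⁻ x, ‖g x‖ₑ ^ 2) + ∑ m, ∫⁻ x, ‖fderiv ℝ g x (EuclideanSpace.single m 1)‖ₑ ^ 2

/-- The `H¹(ℝⁿ) → L²(μ)` trace inequality with constant `C`, tested on `C¹` functions. -/
def HasTraceInequality (μ : Measure (Euc n)) (C : ℝ≥0) : Prop :=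
  ∀ g : Euc n → ℂ, ContDiff ℝ 1 g → ∫⁻ x, ‖g x‖ₑ ^ 2 ∂μ ≤ C * sobolevNormSq g

lemma lintegral_enorm_sq_lt_top_of_hasCompactSupport {g : Euc n → ℂ} (hg : Continuous g)
    (hsupp : HasCompactSupport g) : ∫⁻ x, ‖g x‖ₑ ^ 2 < ⊤ := by
  have hsupp_sq : HasCompactSupport fun x ↦ ‖g x‖ ^ 2 :=
    hsupp.comp_left (g := fun z ↦ ‖z‖ ^ 2) (by simp)
  have hint : Integrable fun x ↦ ‖g x‖ ^ 2 :=
    (hg.norm.pow 2).integrable_of_hasCompactSupport hsupp_sq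
  simpa only [HasFiniteIntegral, enorm_pow, enorm_norm] using hint.hasFiniteIntegral

lemma sobolevNormSq_lt_top {g : Euc n → ℂ} (hg : ContDiff ℝ 1 g) (hsupp : HasCompactSupport g) :
    sobolevNormSq g < ⊤ :=
  ENNReal.add_lt_top.2 ⟨lintegral_enorm_sq_lt_top_of_hasCompactSupport hg.continuous hsupp,
    ENNReal.sum_lt_top.2 fun _ _ ↦ lintegral_enorm_sq_lt_top_of_hasCompactSupport
      ((hg.continuous_fderiv one_ne_zero).clm_apply continuous_const) (hsupp.fderiv_apply ℝ _)⟩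

/-- Test the inequality on a bump function. -/
lemma HasTraceInequality.isLocallyFiniteMeasure {μ : Measure (Euc n)} {C : ℝ≥0}
    (hμ : HasTraceInequality μ C) : IsLocallyFiniteMeasure μ := by
  refine ⟨fun x ↦ ⟨Metric.closedBall x 1, Metric.closedBall_mem_nhds x one_pos, ?_⟩⟩
  let χ : ContDiffBump x := ⟨1, 2, one_pos, one_lt_two⟩
  have hχ : ContDiff ℝ 1 fun y ↦ (χ y : ℂ) := Complex.ofRealCLM.contDiff.comp χ.contDiff
  have hsupp : HasCompactSupport fun y ↦ (χ y : ℂ) :=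
    χ.hasCompactSupport.comp_left Complex.ofReal_zero
  calc μ (Metric.closedBall x 1)
      = ∫⁻ _ in Metric.closedBall x 1, 1 ∂μ := (setLIntegral_one _).symm
    _ = ∫⁻ y in Metric.closedBall x 1, ‖(χ y : ℂ)‖ₑ ^ 2 ∂μ :=
      setLIntegral_congr_fun Metric.isClosed_closedBall.measurableSet fun y hy ↦ by
        simp [χ.one_of_mem_closedBall hy]
    _ ≤ ∫⁻ y, ‖(χ y : ℂ)‖ₑ ^ 2 ∂μ := setLIntegral_le_lintegral _ _
    _ ≤ C * sobolevNormSq fun y ↦ (χ y : ℂ) := hμ _ hχ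
    _ < ⊤ := ENNReal.mul_lt_top ENNReal.coe_lt_top (sobolevNormSq_lt_top hχ hsupp)

lemma hasTraceInequality_of_antilipschitzWith_dropCoord {d : ℕ} {m : Fin (d + 1)}
    {T : Set (Euc (d + 1))} {K : ℝ≥0} (hT : AntilipschitzWith K fun x : T ↦ dropCoord m x) :
    HasTraceInequality (μH[d].restrict T) (K ^ d) := by
  intro g hg
  refine (setLIntegral_enorm_sq_le_of_antilipschitzWith_dropCoord m hT hg).trans ?_
  rw [ENNReal.coe_pow, sobolevNormSq]
  gcongr
  exact Finset.single_le_sum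
    (f := fun m ↦ ∫⁻ x, ‖fderiv ℝ g x (EuclideanSpace.single m 1)‖ₑ ^ 2)
    (fun _ _ ↦ zero_le) (Finset.mem_univ m)

theorem hasTraceInequality_sphere {d : ℕ} (c : Euc (d + 1)) (ρ : ℝ) :
    HasTraceInequality (μH[d].restrict (Metric.sphere c ρ))
      ((d + 1) * (2 * ((d + 1) ^ 2) ^ d)) := by
  intro g hg
  set B : ℝ≥0∞ := (((d + 1) ^ 2) ^ d : ℝ≥0) * sobolevNormSq g
  have hcap : ∀ m s, |s| = 1 → ∫⁻ x in sphericalCap c ρ m s, ‖g x‖ₑ ^ 2 ∂μH[d] ≤ B :=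
    fun m s hs ↦ hasTraceInequality_of_antilipschitzWith_dropCoord
      (antilipschitzWith_dropCoord_sphericalCap c ρ m hs) g hg
  calc ∫⁻ x in Metric.sphere c ρ, ‖g x‖ₑ ^ 2 ∂μH[d]
      ≤ ∫⁻ x in ⋃ m, (sphericalCap c ρ m 1 ∪ sphericalCap c ρ m (-1)), ‖g x‖ₑ ^ 2 ∂μH[d] :=
        lintegral_mono_set (sphere_subset_iUnion_sphericalCap c ρ)
    _ ≤ ∑ m, ∫⁻ x in sphericalCap c ρ m 1 ∪ sphericalCap c ρ m (-1), ‖g x‖ₑ ^ 2 ∂μH[d] :=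
        (lintegral_iUnion_le _ _).trans_eq (tsum_fintype _)
    _ ≤ ∑ _m : Fin (d + 1), (B + B) := by
        gcongr with m
        exact (lintegral_union_le _ _ _).trans
          (add_le_add (hcap m 1 (by simp)) (hcap m (-1) (by simp)))
    _ = ((d + 1) * (2 * ((d + 1) ^ 2) ^ d) : ℝ≥0) * sobolevNormSq g := by
        simp only [B, Finset.sum_const, Finset.card_univ, Fintype.card_fin, nsmul_eq_mul]
        push_cast
        ring

end Trace

/-! ### Tensorisation -/

lemma lintegral_pi_update_mono {ι : Type*} [Fintype ι] [DecidableEq ι] {X : ι → Type*}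
    [∀ i, MeasurableSpace (X i)] (μ : ∀ i, Measure (X i)) [∀ i, SigmaFinite (μ i)] (i : ι)
    {ν ν' : Measure (X i)} [SigmaFinite ν] [SigmaFinite ν'] {f g : (∀ i, X i) → ℝ≥0∞}
    (hf : Measurable f) (hg : Measurable g)
    (hfg : ∀ x, ∫⁻ y, f (Function.update x i y) ∂ν ≤ ∫⁻ y, g (Function.update x i y) ∂ν') :
    ∫⁻ x, f x ∂Measure.pi (Function.update μ i ν) ≤
      ∫⁻ x, g x ∂Measure.pi (Function.update μ i ν') := by
  have hsigma : ∀ (κ : Measure (X i)) [SigmaFinite κ] j, SigmaFinite (Function.update μ i κ j) := by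
    intro κ _ j
    rcases eq_or_ne j i with rfl | hj
    · rwa [Function.update_self]
    · rw [Function.update_of_ne hj]
      infer_instance
  have := hsigma ν
  have := hsigma ν'
  rcases isEmpty_or_nonempty (∀ i, X i) with _ | ⟨⟨x⟩⟩
  · simp only [lintegral_of_isEmpty, le_refl]
  have hfactors : (fun j : Finset.univ.erase i ↦ Function.update μ i ν j) =
      fun j : Finset.univ.erase i ↦ Function.update μ i ν' j := by
    funext j
    have hj : (j : ι) ≠ i := Finset.ne_of_mem_erase j.2
    rw [Function.update_of_ne hj, Function.update_of_ne hj]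
  rw [lintegral_eq_lmarginal_univ x, lintegral_eq_lmarginal_univ x,
    lmarginal_erase' f hf (Finset.mem_univ i), lmarginal_erase' g hg (Finset.mem_univ i)]
  simp only [Function.update_self, lmarginal, hfactors]
  exact lintegral_mono fun y ↦ hfg _

lemma sum_sum_update_of_notMem {ι β M : Type*} [Fintype ι] [DecidableEq ι] [Fintype β]
    [DecidableEq β] [AddCommMonoid M] {s : Finset ι} {i : ι} (hi : i ∉ s) (o : β)
    (f : (ι → β) → M) :
    ∑ a with ∀ j ∉ s, a j = o, ∑ b, f (Function.update a i b) =
      ∑ a with ∀ j ∉ insert i s, a j = o, f a := by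
  rw [← Finset.sum_product']
  refine Finset.sum_nbij' (fun p ↦ Function.update p.1 i p.2)
    (fun a ↦ (Function.update a i o, a i)) (by grind) (by grind) ?_ (by grind) (by grind)
  rintro ⟨a, b⟩ hab
  have hai : a i = o := (Finset.mem_filter.1 (Finset.mem_product.1 hab).1).2 i hi
  simp [← hai]

section Slots

variable {n k : ℕ}

/-- The `m`-th coordinate direction of the variable `ξᵢ` in `(ℝⁿ)ᵏ × ℝⁿ`. -/
def slotDirection (i : Fin k) (m : Fin n) : (Fin k → Euc n) × Euc n :=
  (Pi.single i (EuclideanSpace.single m 1), 0)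

/-- The analogue of `dirsOf` that differentiates only in the variables `ξᵢ` with `i ∈ l`. -/
def slotDirections (l : List (Fin k)) (a : Fin k → Option (Fin n)) :
    List ((Fin k → Euc n) × Euc n) :=
  l.filterMap fun i ↦ (a i).map (slotDirection i)

lemma slotDirections_cons (i : Fin k) (l : List (Fin k)) (a : Fin k → Option (Fin n)) :
    slotDirections (i :: l) a = ((a i).map (slotDirection i)).toList ++ slotDirections l a := by
  rw [slotDirections, slotDirections, List.filterMap_cons]
  cases (a i).map (slotDirection i) <;> rfl

lemma slotDirections_update_of_notMem {i : Fin k} {l : List (Fin k)} (hi : i ∉ l)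
    (a : Fin k → Option (Fin n)) (b : Option (Fin n)) :
    slotDirections l (Function.update a i b) = slotDirections l a :=
  List.filterMap_congr fun j hj ↦ by rw [Function.update_of_ne (ne_of_mem_of_not_mem hj hi)]

lemma dirDerivList_append {V : Type*} [NormedAddCommGroup V] [NormedSpace ℝ V] (vs ws : List V)
    (F : V → ℂ) : dirDerivList (vs ++ ws) F = dirDerivList vs (dirDerivList ws F) :=
  List.foldr_append

lemma contDiff_dirDerivList {V : Type*} [NormedAddCommGroup V] [NormedSpace ℝ V] {vs : List V}
    {F : V → ℂ} {p : ℕ} (hF : ContDiff ℝ (p + vs.length : ℕ) F) :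
    ContDiff ℝ p (dirDerivList vs F) := by
  induction vs generalizing p with
  | nil => exact hF
  | cons v vs ih =>
    have h : ContDiff ℝ (p + 1 : ℕ) (dirDerivList vs F) :=
      ih (by rwa [List.length_cons, add_comm vs.length, ← add_assoc] at hF)
    exact (h.fderiv_right (by push_cast; exact le_rfl)).clm_apply contDiff_const

lemma contDiff_dirDerivList_slotDirections {l : List (Fin k)} {p : ℕ}
    {G : (Fin k → Euc n) × Euc n → ℂ} (hG : ContDiff ℝ (p + l.length : ℕ) G)
    (a : Fin k → Option (Fin n)) : ContDiff ℝ p (dirDerivList (slotDirections l a) G) := by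
  have hlen : (slotDirections l a).length ≤ l.length := List.length_filterMap_le _ _
  exact contDiff_dirDerivList (hG.of_le (by exact_mod_cast Nat.add_le_add_left hlen p))

lemma fderiv_comp_update_apply {G : (Fin k → Euc n) × Euc n → ℂ} (hG : Differentiable ℝ G)
    (x : Fin k → Euc n) (η : Euc n) (i : Fin k) (y v : Euc n) :
    fderiv ℝ (fun y ↦ G (Function.update x i y, η)) y v =
      fderiv ℝ G (Function.update x i y, η) (Pi.single i v, 0) := by
  have hslot := (hasFDerivAt_update (𝕜 := ℝ) x (i := i) y).prodMk (hasFDerivAt_const η y)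
  have hcomp : HasFDerivAt (fun y ↦ G (Function.update x i y, η)) _ y :=
    (hG _).hasFDerivAt.comp y hslot
  rw [hcomp.fderiv, ContinuousLinearMap.comp_apply, ContinuousLinearMap.prod_apply]
  congr 2
  funext j
  rcases eq_or_ne j i with rfl | hj
  · simp
  · simp [hj]

lemma sobolevNormSq_comp_update {G : (Fin k → Euc n) × Euc n → ℂ} (hG : Differentiable ℝ G)
    (x : Fin k → Euc n) (η : Euc n) (i : Fin k) :
    sobolevNormSq (fun y ↦ G (Function.update x i y, η)) =
      ∑ b : Option (Fin n), ∫⁻ y,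
        ‖dirDerivList (b.map (slotDirection i)).toList G (Function.update x i y, η)‖ₑ ^ 2 := by
  simp only [sobolevNormSq, fderiv_comp_update_apply hG, Fintype.sum_option]
  rfl

lemma measurable_enorm_sq_dirDerivList {vs : List ((Fin k → Euc n) × Euc n)}
    {G : (Fin k → Euc n) × Euc n → ℂ} (hG : ContDiff ℝ vs.length G) (η : Euc n) :
    Measurable fun ξ ↦ ‖dirDerivList vs G (ξ, η)‖ₑ ^ 2 := by
  have hcont : Continuous (dirDerivList vs G) :=
    (contDiff_dirDerivList (p := 0) (by rwa [zero_add])).continuous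
  exact (hcont.comp (Continuous.prodMk_left η)).enorm.measurable.pow_const 2

lemma HasTraceInequality.lintegral_pi_update_le {μ : Fin k → Measure (Euc n)}
    [∀ j, SigmaFinite (μ j)] {ν : Measure (Euc n)} {C : ℝ≥0} (hν : HasTraceInequality ν C)
    (i : Fin k) {G : (Fin k → Euc n) × Euc n → ℂ} (hG : ContDiff ℝ 1 G) (η : Euc n) :
    ∫⁻ ξ, ‖G (ξ, η)‖ₑ ^ 2 ∂Measure.pi (Function.update μ i ν) ≤
      C * ∑ b : Option (Fin n),
        ∫⁻ ξ, ‖dirDerivList (b.map (slotDirection i)).toList G (ξ, η)‖ₑ ^ 2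
          ∂Measure.pi (Function.update μ i volume) := by
  have := hν.isLocallyFiniteMeasure
  have hmeas : ∀ b : Option (Fin n), Measurable fun ξ ↦
      ‖dirDerivList (b.map (slotDirection i)).toList G (ξ, η)‖ₑ ^ 2 := fun b ↦
    measurable_enorm_sq_dirDerivList
      (hG.of_le (by exact_mod_cast Option.length_toList_le)) η
  have hmeas_update : ∀ (x : Fin k → Euc n) (b : Option (Fin n)), Measurable fun y ↦
      ‖dirDerivList (b.map (slotDirection i)).toList G (Function.update x i y, η)‖ₑ ^ 2 :=
    fun x b ↦ (hmeas b).comp (measurable_update x)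
  rw [← lintegral_finsetSum _ fun b _ ↦ hmeas b,
    ← lintegral_const_mul _ (Finset.measurable_sum _ fun b _ ↦ hmeas b)]
  refine lintegral_pi_update_mono μ i (hmeas none)
    ((Finset.measurable_sum _ fun b _ ↦ hmeas b).const_mul _) fun x ↦ ?_
  have hslot : ContDiff ℝ 1 fun y ↦ G (Function.update x i y, η) :=
    hG.comp ((contDiff_update 1 x i).prodMk contDiff_const)
  rw [lintegral_const_mul _ (Finset.measurable_sum _ fun b _ ↦ hmeas_update x b),
    lintegral_finsetSum _ fun b _ ↦ hmeas_update x b,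
    ← sobolevNormSq_comp_update (hG.differentiable one_ne_zero)]
  exact hν _ hslot

lemma HasTraceInequality.lintegral_slotDirections_le {μ : Fin k → Measure (Euc n)}
    [∀ j, SigmaFinite (μ j)] {i : Fin k} {C : ℝ≥0} (hμ : HasTraceInequality (μ i) C)
    {l : List (Fin k)} (hi : i ∉ l) {G : (Fin k → Euc n) × Euc n → ℂ}
    (hG : ContDiff ℝ (i :: l).length G) (η : Euc n) (a : Fin k → Option (Fin n)) :
    ∫⁻ ξ, ‖dirDerivList (slotDirections l a) G (ξ, η)‖ₑ ^ 2 ∂Measure.pi μ ≤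
      C * ∑ b, ∫⁻ ξ, ‖dirDerivList (slotDirections (i :: l) (Function.update a i b)) G (ξ, η)‖ₑ ^ 2
        ∂Measure.pi (Function.update μ i volume) := by
  have hD : ContDiff ℝ 1 (dirDerivList (slotDirections l a) G) :=
    contDiff_dirDerivList_slotDirections (p := 1) (by rwa [add_comm]) a
  have h := hμ.lintegral_pi_update_le (μ := μ) i hD η
  simpa only [slotDirections_cons, slotDirections_update_of_notMem hi, Function.update_self,
    dirDerivList_append, Function.update_eq_self] using h

lemma sigmaFinite_piecewise_volume {μ : Fin k → Measure (Euc n)} (hμ : ∀ j, SigmaFinite (μ j))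
    (s : Finset (Fin k)) (j : Fin k) :
    SigmaFinite (s.piecewise (fun _ ↦ (volume : Measure (Euc n))) μ j) :=
  Finset.piecewise_cases (π := fun _ ↦ Measure (Euc n)) s _ μ (fun κ ↦ SigmaFinite κ)
    inferInstance (hμ j)

theorem lintegral_pi_le_sum_slotDirections {μ : Fin k → Measure (Euc n)} {C : ℝ≥0}
    (hμ : ∀ i, HasTraceInequality (μ i) C) {l : List (Fin k)} (hl : l.Nodup)
    {G : (Fin k → Euc n) × Euc n → ℂ} (hG : ContDiff ℝ l.length G) (η : Euc n) :
    ∫⁻ ξ, ‖G (ξ, η)‖ₑ ^ 2 ∂Measure.pi μ ≤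
      C ^ l.length * ∑ a : Fin k → Option (Fin n) with ∀ j ∉ l.toFinset, a j = none,
        ∫⁻ ξ, ‖dirDerivList (slotDirections l a) G (ξ, η)‖ₑ ^ 2
          ∂Measure.pi (l.toFinset.piecewise (fun _ ↦ volume) μ) := by
  induction l with
  | nil =>
    have hnone : ({a | ∀ j ∉ ([] : List (Fin k)).toFinset, a j = none} :
        Finset (Fin k → Option (Fin n))) = {fun _ ↦ none} := by
      ext a
      simp [funext_iff]
    rw [hnone, Finset.sum_singleton, List.toFinset_nil, Finset.piecewise_empty, List.length_nil,
      pow_zero, one_mul]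
    rfl
  | cons i l ih =>
    obtain ⟨hi, hl⟩ := List.nodup_cons.1 hl
    have hi' : i ∉ l.toFinset := by rwa [List.mem_toFinset]
    set μl : Fin k → Measure (Euc n) := l.toFinset.piecewise (fun _ ↦ volume) μ with hμl
    have hlocal := fun j ↦ (hμ j).isLocallyFiniteMeasure
    have hsigma := sigmaFinite_piecewise_volume (μ := μ) (fun j ↦ inferInstance) l.toFinset
    have hμi : HasTraceInequality (μl i) C := by
      rw [hμl, Finset.piecewise_eq_of_notMem _ _ _ hi']
      exact hμ i
    set I : (Fin k → Option (Fin n)) → ℝ≥0∞ := fun a ↦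
      ∫⁻ ξ, ‖dirDerivList (slotDirections (i :: l) a) G (ξ, η)‖ₑ ^ 2
        ∂Measure.pi (Function.update μl i volume)
    rw [List.toFinset_cons, Finset.piecewise_insert]
    calc ∫⁻ ξ, ‖G (ξ, η)‖ₑ ^ 2 ∂Measure.pi μ
        ≤ C ^ l.length * ∑ a : Fin k → Option (Fin n) with ∀ j ∉ l.toFinset, a j = none,
            ∫⁻ ξ, ‖dirDerivList (slotDirections l a) G (ξ, η)‖ₑ ^ 2 ∂Measure.pi μl :=
          ih hl (hG.of_le (by exact_mod_cast Nat.le_succ _))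
      _ ≤ C ^ l.length * ∑ a : Fin k → Option (Fin n) with ∀ j ∉ l.toFinset, a j = none,
            C * ∑ b, I (Function.update a i b) := by
          gcongr with a
          exact hμi.lintegral_slotDirections_le hi hG η a
      _ = C ^ (i :: l).length *
            ∑ a : Fin k → Option (Fin n) with ∀ j ∉ insert i l.toFinset, a j = none, I a := by
          rw [← Finset.mul_sum, ← mul_assoc, ← pow_succ, List.length_cons]
          congr 1
          -- `convert` because the two filters carry different decidability instances
          convert sum_sum_update_of_notMem hi' none I

theorem lintegral_pi_le_sum_dirsOf {μ : Fin k → Measure (Euc n)} {C : ℝ≥0}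
    (hμ : ∀ i, HasTraceInequality (μ i) C) {G : (Fin k → Euc n) × Euc n → ℂ}
    (hG : ContDiff ℝ k G) (η : Euc n) :
    ∫⁻ ξ, ‖G (ξ, η)‖ₑ ^ 2 ∂Measure.pi μ ≤
      C ^ k * ∑ a, ∫⁻ ξ, ‖dirDerivList (dirsOf n k a) G (ξ, η)‖ₑ ^ 2 := by
  have h := lintegral_pi_le_sum_slotDirections hμ (List.nodup_finRange k)
    (by rwa [List.length_finRange]) η
  have hmem : ∀ j, j ∈ (List.finRange k).toFinset := fun j ↦ by simp
  have hvolume : (List.finRange k).toFinset.piecewise (fun _ ↦ volume) μ = fun _ ↦ volume :=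
    funext fun j ↦ Finset.piecewise_eq_of_mem _ _ _ (hmem j)
  simp only [hvolume, List.length_finRange, hmem, not_true_eq_false, IsEmpty.forall_iff,
    implies_true, Finset.filter_true] at h
  exact h

end Slots

theorem stmt2_general (n k : ℕ) (hn : 1 ≤ n) :
    ∃ C : ℝ, 0 < C ∧
      ∀ F : (Fin k → Euc n) × Euc n → ℂ, ContDiff ℝ k F →
        ∀ (η : Euc n) (c : Fin k → Euc n) (ρ : Fin k → ℝ),
          ∫⁻ ξ, ‖F (ξ, η)‖ₑ ^ 2
              ∂(Measure.pi fun i ↦ μH[(n : ℝ) - 1].restrict (Metric.sphere (c i) (ρ i)))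
            ≤ ENNReal.ofReal C * ∑ a, ∫⁻ ξ, ‖dirDerivList (dirsOf n k a) F (ξ, η)‖ₑ ^ 2 := by
  obtain ⟨d, rfl⟩ : ∃ d, n = d + 1 := ⟨n - 1, by omega⟩
  set C : ℝ≥0 := (d + 1) * (2 * ((d + 1) ^ 2) ^ d)
  refine ⟨(C ^ k : ℝ≥0), by positivity, fun F hF η c ρ ↦ ?_⟩
  rw [ENNReal.ofReal_coe_nnreal, ENNReal.coe_pow, Nat.cast_succ, add_sub_cancel_right]
  exact lintegral_pi_le_sum_dirsOf (fun i ↦ hasTraceInequality_sphere (c i) (ρ i)) hF η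

/-- the multi-sphere trace estimate. -/
theorem stmt2 (n k : ℕ) (hn : 2 ≤ n) (hk : 1 ≤ k) :
    ∃ C : ℝ, 0 < C ∧
      ∀ (F : SchwartzMap ((Fin k → Euc n) × Euc n) ℂ)
        (η : Euc n), η ≠ 0 → ∀ r : Fin k → ℝ, (∀ i, 0 < r i) →
        (∫⁻ ξ : Fin k → Euc n, (‖F (ξ, η)‖₊ : ℝ≥0∞) ^ 2
            ∂(Measure.pi fun i => ewaldM n (r i) η))
          ≤ ENNReal.ofReal C *
            ∑ a : Fin k → Option (Fin n),
              ∫⁻ ξ : Fin k → Euc n,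
                (‖dirDerivList (dirsOf n k a) (⇑F) (ξ, η)‖₊ : ℝ≥0∞) ^ 2 := by
  obtain ⟨C, hC, h⟩ := stmt2_general n k (by omega)
  exact ⟨C, hC, fun F η _ r _ ↦ h F (F.smooth k) η _ _⟩
end
end

section
/- Let n ≥ 1, 1 ≤ p < ∞, α ∈ ℝ, 0 < δ < 1, τ ∈ ℝ, γ > 0 and M > 0. Let {F_r}_{r∈(0,∞)} be a family of locally integrable functions on ℝⁿ such that (r,η) ↦ F_r(η) is measurable and: (1) for almost every η ∈ ℝⁿ the map r ↦ F_r(η) is continuously differentiable on (1−δ, 1+δ), and for every r ∈ (1−δ,1+δ) one has ‖∂_r F_r‖_{L^p_τ} ≤ M; (2) for every r ∈ (0,∞) one has ‖F_r‖_{L^p_α} ≤ (1+r)^{−γ} M. Then for almost every η the principal value P(F)(η) := lim_{ε→0⁺} ∫_{{r>0 : |1−r|>ε}} F_r(η)/(1−r) dr exists, and for every α' < α there is a constant C₂ = C₂(δ, α, α', τ, p, γ, n), independent of the family {F_r} and of M, such that ‖ iπ F₁ + P(F) ‖_{L^p_{α'}} ≤ C₂ M. -/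
open MeasureTheory Filter Set
open scoped ENNReal

noncomputable section

/-- The Japanese bracket `⟨x⟩ = (1+|x|²)^{1/2}`. -/
def jap {n : ℕ} (x : Euc n) : ℝ := Real.sqrt (1 + ‖x‖ ^ 2)

/-!
Since `1 / (1 - r)` is odd about `r = 1`, subtracting `F₁` from `F_r` near `r = 1` does not change
the truncated integrals. By the fundamental theorem of calculus and the bound on `∂_r F_r`, the
difference `F_r - F₁` is `O(|1 - r|)` in `L^p_τ`, and it is bounded in `L^p_α`. Interpolating with a
small exponent `θ > 0`, so that `α' ≤ θ τ + (1 - θ) α`, makes it `O(|1 - r|^θ)` in `L^p_{α'}`.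
After division by `1 - r` the `L^p_{α'}` norm is therefore integrable near `r = 1`, and the factor
`(1 + r)^(-γ)` makes it integrable at infinity. Minkowski's integral inequality then shows at once
that the regularised integrand is integrable in `r` for almost every `η`, so that the principal
value exists, and that the principal value is bounded in `L^p_{α'}`.
-/

section Minkowski

variable {X Y : Type*} [MeasurableSpace X] [MeasurableSpace Y] {ν : Measure X} {μ : Measure Y}
  {p : ℝ≥0∞}

lemma measurable_eLpNorm_prodMk [SFinite μ] {g : X → Y → ℝ≥0∞}
    (hg : Measurable (Function.uncurry g)) : Measurable fun x => eLpNorm (g x) p μ := by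
  rcases eq_or_ne p 0 with rfl | hp0
  · simpa only [eLpNorm_exponent_zero] using measurable_const
  rcases eq_or_ne p ∞ with rfl | hp
  · have hle_iff (x : X) (a : ℝ≥0∞) : eLpNorm (g x) ∞ μ ≤ a ↔ ∀ᵐ y ∂μ, g x y ≤ a :=
      ⟨fun h => (ae_le_eLpNormEssSup (f := g x)).mono fun _ hy =>
          hy.trans (eLpNorm_exponent_top (f := g x) ▸ h),
        fun h => eLpNorm_exponent_top (f := g x) ▸ eLpNormEssSup_le_of_ae_enorm_bound h⟩
    refine measurable_of_Ioi fun a => ?_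
    have hpreimage : (fun x => eLpNorm (g x) ∞ μ) ⁻¹' Ioi a =
        {x | μ (Prod.mk x ⁻¹' {z | a < Function.uncurry g z}) ≠ 0} := by
      ext x
      rw [mem_preimage, mem_Ioi, ← not_le, hle_iff, ae_iff]
      simp only [not_le, mem_ofPred_eq, preimage_ofPred_eq, Function.uncurry_apply_pair, ne_eq]
    rw [hpreimage]
    exact (measurable_measure_prodMk_left (measurableSet_lt measurable_const hg))
      (measurableSet_singleton 0).compl
  · simp only [eLpNorm_eq_lintegral_rpow_enorm_toReal hp0 hp, enorm_eq_self]
    exact (hg.pow_const _).lintegral_prod_right'.pow_const _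

lemma lintegral_rpow_le_mul_lintegral_rpow_mul_rpow {q : ℝ} (hq : 1 ≤ q) {f N : X → ℝ≥0∞}
    (hf : AEMeasurable f ν) (hN : AEMeasurable N ν) (hN_top : ∀ᵐ x ∂ν, N x ≠ ∞)
    (hN_zero : ∀ᵐ x ∂ν, N x = 0 → f x = 0) :
    (∫⁻ x, f x ∂ν) ^ q ≤ (∫⁻ x, N x ∂ν) ^ (q - 1) * ∫⁻ x, f x ^ q * N x ^ (1 - q) ∂ν := by
  have hq0 : 0 < q := zero_lt_one.trans_le hq
  have hfactor : ∀ᵐ x ∂ν, f x ≤ (f x ^ q * N x ^ (1 - q)) ^ q⁻¹ * N x ^ (1 - q⁻¹) := by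
    filter_upwards [hN_top, hN_zero] with x hx_top hx_zero
    rcases eq_or_ne (N x) 0 with hx | hx
    · simp only [hx_zero hx, zero_le]
    · rw [ENNReal.mul_rpow_of_nonneg _ _ (by positivity), ENNReal.rpow_rpow_inv hq0.ne',
        ← ENNReal.rpow_mul, mul_assoc, ← ENNReal.rpow_add _ _ hx hx_top,
        show (1 - q) * q⁻¹ + (1 - q⁻¹) = 0 by field_simp; ring, ENNReal.rpow_zero, mul_one]
  calc (∫⁻ x, f x ∂ν) ^ q
      ≤ (∫⁻ x, (f x ^ q * N x ^ (1 - q)) ^ q⁻¹ * N x ^ (1 - q⁻¹) ∂ν) ^ q := by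
        gcongr ?_ ^ q
        exact lintegral_mono_ae hfactor
    _ ≤ ((∫⁻ x, f x ^ q * N x ^ (1 - q) ∂ν) ^ q⁻¹ * (∫⁻ x, N x ∂ν) ^ (1 - q⁻¹)) ^ q := by
        gcongr
        exact ENNReal.lintegral_mul_norm_pow_le ((hf.pow_const q).mul (hN.pow_const _)) hN
          (by positivity) (sub_nonneg.2 (inv_le_one_of_one_le₀ hq)) (by ring)
    _ = (∫⁻ x, N x ∂ν) ^ (q - 1) * ∫⁻ x, f x ^ q * N x ^ (1 - q) ∂ν := by
        rw [ENNReal.mul_rpow_of_nonneg _ _ hq0.le, ENNReal.rpow_inv_rpow hq0.ne',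
          ← ENNReal.rpow_mul, mul_comm, show (1 - q⁻¹) * q = q - 1 by field_simp]

lemma ae_lt_top_of_eLpNorm_ne_top (hp : p ≠ 0) {g : Y → ℝ≥0∞} (hg : AEMeasurable g μ)
    (hfin : eLpNorm g p μ ≠ ∞) : ∀ᵐ y ∂μ, g y < ∞ := by
  rcases eq_or_ne p ∞ with rfl | hp_top
  · filter_upwards [ae_le_eLpNormEssSup (f := g) (μ := μ)] with y hy
    exact (enorm_eq_self (g y) ▸ hy).trans_lt (eLpNorm_exponent_top (f := g) ▸ hfin.lt_top)
  · have hlt := (eLpNorm_lt_top_iff_lintegral_rpow_enorm_lt_top hp hp_top).1 hfin.lt_top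
    simp only [enorm_eq_self] at hlt
    filter_upwards [ae_lt_top' (hg.pow_const _) hlt.ne] with y hy
    exact (ENNReal.rpow_lt_top_iff_of_pos (ENNReal.toReal_pos hp hp_top)).1 hy

variable [SFinite ν] [SFinite μ]

lemma ae_ae_le_eLpNorm_top {g : X → Y → ℝ≥0∞} (hg : Measurable (Function.uncurry g)) :
    ∀ᵐ y ∂μ, ∀ᵐ x ∂ν, g x y ≤ eLpNorm (g x) ∞ μ := by
  have hmeas : MeasurableSet {z : X × Y | g z.1 z.2 ≤ eLpNorm (g z.1) ∞ μ} :=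
    measurableSet_le hg ((measurable_eLpNorm_prodMk hg).comp measurable_fst)
  refine (Measure.ae_ae_comm hmeas).1 (Eventually.of_forall fun x => ?_)
  simpa only [eLpNorm_exponent_top, enorm_eq_self] using ae_le_eLpNormEssSup (f := g x) (μ := μ)

lemma ae_ae_eq_zero_of_lintegral_eq_zero {g : X → Y → ℝ≥0∞}
    (hg : Measurable (Function.uncurry g)) :
    ∀ᵐ y ∂μ, ∀ᵐ x ∂ν, ∫⁻ y', g x y' ∂μ = 0 → g x y = 0 := by
  have hmeas : MeasurableSet {z : X × Y | ∫⁻ y', g z.1 y' ∂μ = 0 → g z.1 z.2 = 0} :=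
    .imp ((hg.lintegral_prod_right'.comp measurable_fst) (measurableSet_singleton 0))
      (hg (measurableSet_singleton 0))
  refine (Measure.ae_ae_comm hmeas).1 (Eventually.of_forall fun x => ?_)
  by_cases hx : ∫⁻ y', g x y' ∂μ = 0
  · filter_upwards [(lintegral_eq_zero_iff hg.of_uncurry_left).1 hx] with y hy _ using hy
  · exact Eventually.of_forall fun y h => (hx h).elim

lemma lintegral_rpow_lintegral_le {q : ℝ} (hq : 1 ≤ q) {g : X → Y → ℝ≥0∞}
    (hg : Measurable (Function.uncurry g)) :
    ∫⁻ y, (∫⁻ x, g x y ∂ν) ^ q ∂μ ≤ (∫⁻ x, (∫⁻ y, g x y ^ q ∂μ) ^ q⁻¹ ∂ν) ^ q := by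
  have hq0 : 0 < q := zero_lt_one.trans_le hq
  set N : X → ℝ≥0∞ := fun x => (∫⁻ y, g x y ^ q ∂μ) ^ q⁻¹
  have hN : Measurable N := (hg.pow_const q).lintegral_prod_right'.pow_const _
  rcases eq_or_ne (∫⁻ x, N x ∂ν) ∞ with htop | hfin
  · rw [htop, ENNReal.top_rpow_of_pos hq0]
    exact le_top
  have hN_top : ∀ᵐ x ∂ν, N x ≠ ∞ := (ae_lt_top hN hfin).mono fun _ h => h.ne
  have hN_rpow (x : X) : ∫⁻ y, g x y ^ q ∂μ = N x ^ q := (ENNReal.rpow_inv_rpow hq0.ne' _).symm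
  have hgN : Measurable (Function.uncurry fun x y => g x y ^ q * N x ^ (1 - q)) :=
    (hg.pow_const q).mul ((hN.pow_const _).comp measurable_fst)
  have hgN_int : Measurable fun y => ∫⁻ x, g x y ^ q * N x ^ (1 - q) ∂ν :=
    hgN.lintegral_prod_left'
  calc ∫⁻ y, (∫⁻ x, g x y ∂ν) ^ q ∂μ
      ≤ ∫⁻ y, (∫⁻ x, N x ∂ν) ^ (q - 1) * ∫⁻ x, g x y ^ q * N x ^ (1 - q) ∂ν ∂μ := by
        refine lintegral_mono_ae ?_
        filter_upwards [ae_ae_eq_zero_of_lintegral_eq_zero (ν := ν) (μ := μ)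
          (g := fun x y => g x y ^ q) (hg.pow_const q)] with y hy
        refine lintegral_rpow_le_mul_lintegral_rpow_mul_rpow hq hg.of_uncurry_right.aemeasurable
          hN.aemeasurable hN_top (hy.mono fun x hx hNx => ?_)
        exact (ENNReal.rpow_eq_zero_iff_of_pos hq0).1 (hx (by simp [hN_rpow, hNx, hq0]))
    _ = (∫⁻ x, N x ∂ν) ^ (q - 1) * ∫⁻ x, N x ^ q * N x ^ (1 - q) ∂ν := by
        rw [lintegral_const_mul _ hgN_int, ← lintegral_lintegral_swap hgN.aemeasurable]
        simp only [lintegral_mul_const _ (hg.of_uncurry_left.pow_const q), hN_rpow]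
    _ ≤ (∫⁻ x, N x ∂ν) ^ (q - 1) * ∫⁻ x, N x ∂ν := by
        refine mul_le_mul' le_rfl (lintegral_mono_ae ?_)
        filter_upwards [hN_top] with x hx
        rcases eq_or_ne (N x) 0 with h0 | h0
        · simp [h0, hq0]
        · simp [← ENNReal.rpow_add _ _ h0 hx]
    _ = (∫⁻ x, N x ∂ν) ^ q := by
        conv_lhs => rw [← ENNReal.rpow_one (∫⁻ x, N x ∂ν), ← ENNReal.rpow_mul, one_mul]
        rw [← ENNReal.rpow_add_of_nonneg _ _ (sub_nonneg.2 hq) zero_le_one, sub_add_cancel]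

lemma eLpNorm_lintegral_le_of_measurable (hp : 1 ≤ p) {g : X → Y → ℝ≥0∞}
    (hg : Measurable (Function.uncurry g)) :
    eLpNorm (fun y => ∫⁻ x, g x y ∂ν) p μ ≤ ∫⁻ x, eLpNorm (g x) p μ ∂ν := by
  rcases eq_or_ne p ∞ with rfl | hp_top
  · rw [eLpNorm_exponent_top]
    refine eLpNormEssSup_le_of_ae_enorm_bound ?_
    filter_upwards [ae_ae_le_eLpNorm_top (ν := ν) hg] with y hy using lintegral_mono_ae hy
  have hp0 : p ≠ 0 := (zero_lt_one.trans_le hp).ne'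
  have hq : 1 ≤ p.toReal := by simpa using ENNReal.toReal_mono hp_top hp
  simp only [eLpNorm_eq_lintegral_rpow_enorm_toReal hp0 hp_top, enorm_eq_self, one_div]
  exact (ENNReal.rpow_inv_le_iff (zero_lt_one.trans_le hq)).2 (lintegral_rpow_lintegral_le hq hg)

lemma eLpNorm_lintegral_le (hp : 1 ≤ p) {g : X → Y → ℝ≥0∞}
    (hg : AEMeasurable (Function.uncurry g) (ν.prod μ)) :
    eLpNorm (fun y => ∫⁻ x, g x y ∂ν) p μ ≤ ∫⁻ x, eLpNorm (g x) p μ ∂ν := by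
  have hmk := hg.ae_eq_mk
  have hmk_right : ∀ᵐ y ∂μ, ∀ᵐ x ∂ν, g x y = hg.mk _ (x, y) :=
    Measure.ae_ae_of_ae_prod (Measure.measurePreserving_swap.quasiMeasurePreserving.ae hmk)
  have hmk_left : ∀ᵐ x ∂ν, ∀ᵐ y ∂μ, g x y = hg.mk _ (x, y) := Measure.ae_ae_of_ae_prod hmk
  calc eLpNorm (fun y => ∫⁻ x, g x y ∂ν) p μ
      = eLpNorm (fun y => ∫⁻ x, hg.mk _ (x, y) ∂ν) p μ :=
        eLpNorm_congr_ae (hmk_right.mono fun _ hy => lintegral_congr_ae hy)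
    _ ≤ ∫⁻ x, eLpNorm (fun y => hg.mk _ (x, y)) p μ ∂ν :=
        eLpNorm_lintegral_le_of_measurable hp hg.measurable_mk
    _ = ∫⁻ x, eLpNorm (g x) p μ ∂ν :=
        lintegral_congr_ae (hmk_left.mono fun _ hx => (eLpNorm_congr_ae hx).symm)

variable {E : Type*} [NormedAddCommGroup E]

lemma ae_integrable_of_lintegral_eLpNorm_ne_top (hp : 1 ≤ p) {f : X → Y → E}
    (hf : AEStronglyMeasurable (Function.uncurry f) (ν.prod μ))
    (hfin : ∫⁻ x, eLpNorm (f x) p μ ∂ν ≠ ∞) : ∀ᵐ y ∂μ, Integrable (fun x => f x y) ν := by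
  have hle : eLpNorm (fun y => ∫⁻ x, ‖f x y‖ₑ ∂ν) p μ ≤ ∫⁻ x, eLpNorm (f x) p μ ∂ν := by
    simpa only [eLpNorm_enorm] using eLpNorm_lintegral_le hp (g := fun x y => ‖f x y‖ₑ) hf.enorm
  have hlt := ae_lt_top_of_eLpNorm_ne_top (zero_lt_one.trans_le hp).ne'
    hf.enorm.lintegral_prod_left' (ne_top_of_le_ne_top hfin hle)
  filter_upwards [hlt, hf.prodMk_right] with y hy hfy using ⟨hfy, hy⟩

lemma eLpNorm_integral_le [NormedSpace ℝ E] (hp : 1 ≤ p) {f : X → Y → E}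
    (hf : AEStronglyMeasurable (Function.uncurry f) (ν.prod μ)) :
    eLpNorm (fun y => ∫ x, f x y ∂ν) p μ ≤ ∫⁻ x, eLpNorm (f x) p μ ∂ν :=
  calc eLpNorm (fun y => ∫ x, f x y ∂ν) p μ ≤ eLpNorm (fun y => ∫⁻ x, ‖f x y‖ₑ ∂ν) p μ :=
        eLpNorm_mono_enorm fun _ => enorm_integral_le_lintegral_enorm _
    _ ≤ ∫⁻ x, eLpNorm (fun y => ‖f x y‖ₑ) p μ ∂ν := eLpNorm_lintegral_le hp hf.enorm
    _ = ∫⁻ x, eLpNorm (f x) p μ ∂ν := by simp only [eLpNorm_enorm]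

end Minkowski

section Interpolation

variable {Y E E₁ E₂ : Type*} [MeasurableSpace Y] {μ : Measure Y} [NormedAddCommGroup E]
  [NormedAddCommGroup E₁] [NormedAddCommGroup E₂]

lemma eLpNorm_le_rpow_mul_rpow_of_norm_le {θ : ℝ} (hθ₀ : 0 < θ) (hθ₁ : θ < 1) (p : ℝ≥0∞)
    {f : Y → E₁} {g : Y → E₂} {h : Y → E} (hf : AEStronglyMeasurable f μ)
    (hg : AEStronglyMeasurable g μ)
    (hfg : ∀ᵐ y ∂μ, ‖h y‖ ≤ ‖f y‖ ^ θ * ‖g y‖ ^ (1 - θ)) :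
    eLpNorm h p μ ≤ eLpNorm f p μ ^ θ * eLpNorm g p μ ^ (1 - θ) := by
  have hθ' : 0 < 1 - θ := sub_pos.2 hθ₁
  have hdiv_mul {t : ℝ} (ht : 0 < t) : p / ENNReal.ofReal t * ENNReal.ofReal t = p :=
    ENNReal.div_mul_cancel (ENNReal.ofReal_pos.2 ht).ne' ENNReal.ofReal_ne_top
  have : ENNReal.HolderTriple (p / ENNReal.ofReal θ) (p / ENNReal.ofReal (1 - θ)) p := ⟨by
    rw [ENNReal.inv_div (.inl ENNReal.ofReal_ne_top) (.inl (ENNReal.ofReal_pos.2 hθ₀).ne'),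
      ENNReal.inv_div (.inl ENNReal.ofReal_ne_top) (.inl (ENNReal.ofReal_pos.2 hθ').ne'),
      ← ENNReal.add_div, ← ENNReal.ofReal_add hθ₀.le hθ'.le, add_sub_cancel, ENNReal.ofReal_one,
      one_div]⟩
  calc eLpNorm h p μ
      ≤ eLpNorm ((fun y => ‖f y‖ ^ θ) • fun y => ‖g y‖ ^ (1 - θ)) p μ :=
        eLpNorm_mono_ae_real hfg
    _ ≤ eLpNorm (fun y => ‖f y‖ ^ θ) (p / ENNReal.ofReal θ) μ *
          eLpNorm (fun y => ‖g y‖ ^ (1 - θ)) (p / ENNReal.ofReal (1 - θ)) μ :=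
        eLpNorm_smul_le_mul_eLpNorm
          ((Real.continuous_rpow_const hθ'.le).comp_aestronglyMeasurable hg.norm)
          ((Real.continuous_rpow_const hθ₀.le).comp_aestronglyMeasurable hf.norm)
    _ = eLpNorm f p μ ^ θ * eLpNorm g p μ ^ (1 - θ) := by
        rw [eLpNorm_norm_rpow _ hθ₀, eLpNorm_norm_rpow _ hθ', hdiv_mul hθ₀, hdiv_mul hθ']

end Interpolation

section MeanValue

variable {Y E : Type*} [MeasurableSpace Y] {μ : Measure Y} [NormedAddCommGroup E]
  [NormedSpace ℝ E] {F : ℝ → Y → E} {I : Set ℝ}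

lemma aestronglyMeasurable_uncurry_deriv (hF : StronglyMeasurable (Function.uncurry F))
    (hI : MeasurableSet I) (hdiff : ∀ᵐ y ∂μ, ∀ r ∈ I, DifferentiableAt ℝ (F · y) r) :
    AEStronglyMeasurable (Function.uncurry fun r y => deriv (F · y) r)
      ((volume.restrict I).prod μ) := by
  have hstep : Tendsto (fun k : ℕ => 1 / ((k : ℝ) + 1)) atTop (nhdsWithin 0 {0}ᶜ) :=
    tendsto_nhdsWithin_iff.2 ⟨tendsto_one_div_add_atTop_nhds_zero_nat,
      Eventually.of_forall fun _ => Nat.one_div_pos_of_nat.ne'⟩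
  refine aestronglyMeasurable_of_tendsto_ae atTop
    (f := fun (k : ℕ) z => (1 / ((k : ℝ) + 1))⁻¹ • (F (z.1 + 1 / ((k : ℝ) + 1)) z.2 - F z.1 z.2))
    (fun k => ?_) ?_
  · have hshift : Measurable fun z : ℝ × Y => (z.1 + 1 / ((k : ℝ) + 1), z.2) := by fun_prop
    exact (((hF.comp_measurable hshift).sub hF).const_smul _).aestronglyMeasurable
  · filter_upwards [Measure.quasiMeasurePreserving_fst.ae (ae_restrict_mem hI),
      Measure.quasiMeasurePreserving_snd.ae hdiff] with z hz₁ hz₂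
    exact (hz₂ z.1 hz₁).hasDerivAt.tendsto_slope_zero.comp hstep

lemma eLpNorm_sub_le_of_deriv [SFinite μ] [CompleteSpace E] {p M : ℝ≥0∞} (hp : 1 ≤ p)
    (hF : StronglyMeasurable (Function.uncurry F)) (hI : IsOpen I)
    (hF_diff : ∀ᵐ y ∂μ, ContDiffOn ℝ 1 (F · y) I)
    (hF_deriv : ∀ r ∈ I, eLpNorm (fun y => deriv (F · y) r) p μ ≤ M)
    {a b : ℝ} (hab : uIcc a b ⊆ I) :
    eLpNorm (fun y => F b y - F a y) p μ ≤ ENNReal.ofReal |b - a| * M := by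
  have hdiff : ∀ᵐ y ∂μ, ∀ r ∈ I, DifferentiableAt ℝ (F · y) r := hF_diff.mono fun y hy r hr =>
    (hy.differentiableOn one_ne_zero).differentiableAt (hI.mem_nhds hr)
  have hftc : ∀ᵐ y ∂μ, ‖F b y - F a y‖ = ‖∫ r in uIoc a b, deriv (F · y) r‖ := by
    filter_upwards [hF_diff, hdiff] with y hy hy'
    rw [← intervalIntegral.norm_integral_eq_norm_integral_uIoc,
      intervalIntegral.integral_deriv_eq_sub fun r hr => hy' r (hab hr)]
    exact ((hy.continuousOn_deriv_of_isOpen hI le_rfl).mono hab).intervalIntegrable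
  have hsub : uIoc a b ⊆ I := uIoc_subset_uIcc.trans hab
  calc eLpNorm (fun y => F b y - F a y) p μ
      = eLpNorm (fun y => ∫ r in uIoc a b, deriv (F · y) r) p μ := eLpNorm_congr_norm_ae hftc
    _ ≤ ∫⁻ r in uIoc a b, eLpNorm (fun y => deriv (F · y) r) p μ :=
        eLpNorm_integral_le hp (aestronglyMeasurable_uncurry_deriv hF measurableSet_uIoc
          (hdiff.mono fun _ hy r hr => hy r (hsub hr)))
    _ ≤ ∫⁻ _ in uIoc a b, M :=
        setLIntegral_mono' measurableSet_uIoc fun r hr => hF_deriv r (hsub hr)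
    _ = ENNReal.ofReal |b - a| * M := by
        rw [setLIntegral_const, Real.volume_uIoc, mul_comm]

end MeanValue

section PrincipalValue

open Metric

lemma integral_eq_zero_of_comp_sub_left {E : Type*} [NormedAddCommGroup E] [NormedSpace ℝ E]
    {f : ℝ → E} (a : ℝ) (hf : ∀ r, f (a - r) = -f r) : ∫ r, f r = 0 := by
  have : IsAddTorsionFree E := .of_isTorsionFree ℝ E
  rw [← self_eq_neg, ← integral_neg]
  simpa only [hf] using (integral_sub_left_eq_self f volume a).symm

lemma integrableOn_inv_sub_annulus (c e : ℝ) {ε : ℝ} (hε : 0 < ε) :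
    IntegrableOn (fun r => (c - r)⁻¹) (ball c e \ closedBall c ε) := by
  have hmeas : MeasurableSet (ball c e \ closedBall c ε) :=
    measurableSet_ball.diff measurableSet_closedBall
  refine Measure.integrableOn_of_bounded (M := ε⁻¹)
    (measure_mono sdiff_subset |>.trans_lt measure_ball_lt_top).ne
    (by fun_prop : Measurable fun r => (c - r)⁻¹).aestronglyMeasurable
    ((ae_restrict_iff' hmeas).2 (Eventually.of_forall fun r hr => ?_))
  have hr' : ε < |c - r| := by simpa [dist_comm r c, Real.dist_eq] using hr.2
  rw [norm_inv, Real.norm_eq_abs]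
  exact inv_anti₀ hε hr'.le

lemma setIntegral_inv_sub_annulus (c e ε : ℝ) :
    ∫ r in ball c e \ closedBall c ε, (c - r)⁻¹ = 0 := by
  rw [← integral_indicator (measurableSet_ball.diff measurableSet_closedBall)]
  refine integral_eq_zero_of_comp_sub_left (2 * c) fun r => ?_
  have hdist : dist (2 * c - r) c = dist r c := by
    rw [dist_comm r c, Real.dist_eq, Real.dist_eq]
    ring_nf
  simp only [indicator, Set.mem_sdiff, mem_ball, mem_closedBall, hdist]
  split_ifs
  · rw [← inv_neg]
    ring_nf
  · exact neg_zero.symm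

lemma aecover_compl_closedBall (c : ℝ) :
    AECover volume (nhdsWithin 0 (Ioi 0)) fun ε : ℝ => (closedBall c ε)ᶜ where
  ae_eventually_mem := (Measure.ae_ne volume c).mono fun r hr => by
    filter_upwards [mem_nhdsWithin_of_mem_nhds (Iio_mem_nhds (dist_pos.2 hr))] with ε hε
    exact fun hr_mem => hε.not_ge (mem_closedBall.1 hr_mem)
  measurableSet _ := measurableSet_closedBall.compl

variable {E : Type*} [NormedAddCommGroup E] [NormedSpace ℝ E]

/-- The regularised integrand of the principal value of `∫ f(r) / (c - r) dr`: on the ball of radius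
`e` around the singularity `c` the value `f c` is subtracted from `f`. This leaves the truncated
integrals unchanged, as `1 / (c - r)` is odd about `c`. -/
def pvIntegrand (c e : ℝ) (f : ℝ → E) (r : ℝ) : E :=
  (c - r)⁻¹ • (f r - (ball c e).indicator (fun _ => f c) r)

lemma setIntegral_inv_sub_smul_eq [CompleteSpace E] {c e ε : ℝ} (hε : 0 < ε) {s : Set ℝ}
    (hs : MeasurableSet s) (hball : ball c e ⊆ s) {f : ℝ → E}
    (hf : IntegrableOn (pvIntegrand c e f) s) :
    ∫ r in s \ closedBall c ε, (c - r)⁻¹ • f r =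
      ∫ r in s \ closedBall c ε, pvIntegrand c e f r := by
  set k : ℝ → E := (ball c e \ closedBall c ε).indicator fun r => (c - r)⁻¹ • f c
  have hmeas : MeasurableSet (ball c e \ closedBall c ε) :=
    measurableSet_ball.diff measurableSet_closedBall
  have hk : Integrable k :=
    (integrable_indicator_iff hmeas).2 ((integrableOn_inv_sub_annulus c e hε).smul_const _)
  have hk_zero : ∫ r in s \ closedBall c ε, k r = 0 := by
    rw [setIntegral_indicator hmeas, inter_eq_right.2 (sdiff_subset_sdiff_left hball),
      integral_smul_const, setIntegral_inv_sub_annulus, zero_smul]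
  calc ∫ r in s \ closedBall c ε, (c - r)⁻¹ • f r
      = ∫ r in s \ closedBall c ε, (pvIntegrand c e f r + k r) := by
        refine setIntegral_congr_fun (hs.diff measurableSet_closedBall) fun r hr => ?_
        by_cases hr' : r ∈ ball c e
        · simp [k, pvIntegrand, hr', hr.2, smul_sub]
        · simp [k, pvIntegrand, hr']
    _ = ∫ r in s \ closedBall c ε, pvIntegrand c e f r := by
        rw [integral_add (hf.mono_set sdiff_subset) hk.integrableOn, hk_zero, add_zero]

lemma tendsto_setIntegral_inv_sub_smul [CompleteSpace E] {c e : ℝ} {s : Set ℝ}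
    (hs : MeasurableSet s) (hball : ball c e ⊆ s) {f : ℝ → E}
    (hf : IntegrableOn (pvIntegrand c e f) s) :
    Tendsto (fun ε => ∫ r in s \ closedBall c ε, (c - r)⁻¹ • f r) (nhdsWithin 0 (Ioi 0))
      (nhds (∫ r in s, pvIntegrand c e f r)) := by
  refine ((aecover_compl_closedBall c).restrict.integral_tendsto_of_countably_generated
    hf).congr' ?_
  filter_upwards [self_mem_nhdsWithin] with ε hε
  rw [Measure.restrict_restrict measurableSet_closedBall.compl, inter_comm, ← sdiff_eq,
    setIntegral_inv_sub_smul_eq hε hs hball hf]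

end PrincipalValue

section Majorant

open Metric

lemma integrableOn_ball_abs_sub_rpow (c e : ℝ) {s : ℝ} (hs : -1 < s) :
    IntegrableOn (fun r => |c - r| ^ s) (ball c e) := by
  have hball : IntegrableOn (fun x : ℝ => |x| ^ s) (ball 0 e) := by
    refine integrableOn_ball_of_norm_le_rpow (C := 1) (α := -s) (by simp)
      (by simpa using neg_lt.1 hs) (Eventually.of_forall fun x => ?_)
      (by fun_prop : Measurable fun x : ℝ => |x| ^ s).aestronglyMeasurable
    rw [one_mul, neg_neg, Real.norm_eq_abs, Real.norm_eq_abs, abs_of_nonneg (by positivity)]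
  have hpreimage : (fun r => c - r) ⁻¹' ball 0 e = ball c e := by
    ext r
    simp [dist_comm r c, Real.dist_eq]
  rw [← hpreimage]
  exact ((Measure.measurePreserving_sub_left volume c).integrableOn_comp_preimage
    (MeasurableEquiv.subLeft c).measurableEmbedding).2 hball

/-- The function of `r` that dominates, up to the factor `M`, the weighted `L^p` norm of the
regularised integrand: the first summand is the interpolated bound near the singularity `r = 1`,
the second one the decay estimate away from it. -/
def pvMajorant (e θ γ r : ℝ) : ℝ :=
  2 * (ball 1 e).indicator (fun r => |1 - r| ^ (θ - 1)) r + (1 + 2 / e) * (1 + r) ^ (-γ - 1)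

lemma integrableOn_pvMajorant (e : ℝ) {θ γ : ℝ} (hθ : 0 < θ) (hγ : 0 < γ) :
    IntegrableOn (pvMajorant e θ γ) (Ioi 0) := by
  have hnear : IntegrableOn ((ball 1 e).indicator fun r : ℝ => |1 - r| ^ (θ - 1)) (Ioi 0) :=
    ((integrable_indicator_iff measurableSet_ball).2
      (integrableOn_ball_abs_sub_rpow 1 e (by linarith))).integrableOn
  have hfar : IntegrableOn (fun r : ℝ => (1 + r) ^ (-γ - 1)) (Ioi 0) := by
    simpa only [add_comm] using
      integrableOn_add_rpow_Ioi_of_lt (by linarith : -γ - 1 < -1) (by norm_num : -(1 : ℝ) < 0)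
  exact (hnear.const_mul 2).add (hfar.const_mul (1 + 2 / e))

lemma pvMajorant_nonneg {e r : ℝ} (he : 0 < e) (hr : 0 < r) (θ γ : ℝ) :
    0 ≤ pvMajorant e θ γ r := by
  have hnear : 0 ≤ (ball 1 e).indicator (fun r : ℝ => |1 - r| ^ (θ - 1)) r :=
    indicator_nonneg (fun _ _ => by positivity) r
  unfold pvMajorant
  positivity

lemma setIntegral_pvMajorant_nonneg {e : ℝ} (he : 0 < e) (θ γ : ℝ) :
    0 ≤ ∫ r in Ioi 0, pvMajorant e θ γ r :=
  setIntegral_nonneg measurableSet_Ioi fun _ hr => pvMajorant_nonneg he hr θ γ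

lemma le_pvMajorant_of_mem_ball {e r : ℝ} (he : 0 < e) (hr : 0 < r) (θ γ : ℝ)
    (hre : r ∈ ball 1 e) : 2 * |1 - r| ^ (θ - 1) ≤ pvMajorant e θ γ r := by
  rw [pvMajorant, indicator_of_mem hre, le_add_iff_nonneg_right]
  positivity

lemma le_pvMajorant_of_notMem_ball {e r : ℝ} (he : 0 < e) (hr : 0 < r) (θ γ : ℝ)
    (hre : r ∉ ball 1 e) : |1 - r|⁻¹ * (1 + r) ^ (-γ) ≤ pvMajorant e θ γ r := by
  have hdist : e ≤ |1 - r| := by simpa [dist_comm r 1, Real.dist_eq] using hre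
  have hle : 1 + r ≤ (1 + 2 / e) * |1 - r| :=
    calc 1 + r ≤ |1 - r| + 2 := by linarith [neg_le_abs (1 - r)]
      _ ≤ |1 - r| + 2 * (|1 - r| / e) := by gcongr; linarith [(one_le_div he).2 hdist]
      _ = (1 + 2 / e) * |1 - r| := by ring
  have hinv : |1 - r|⁻¹ ≤ (1 + 2 / e) * (1 + r)⁻¹ := by
    rw [inv_le_iff_one_le_mul₀ (he.trans_le hdist), ← div_eq_mul_inv, div_mul_eq_mul_div,
      one_le_div (by positivity)]
    exact hle
  calc |1 - r|⁻¹ * (1 + r) ^ (-γ) ≤ (1 + 2 / e) * (1 + r)⁻¹ * (1 + r) ^ (-γ) := by gcongr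
    _ = pvMajorant e θ γ r := by
        rw [pvMajorant, indicator_of_notMem hre, Real.rpow_sub_one (by positivity)]
        ring

end Majorant

section Family

open Metric

variable {Y E : Type*} [MeasurableSpace Y] [NormedAddCommGroup E] [NormedSpace ℝ E]

/-- The families `F_r`, `r > 0`, of the principal value estimate: `∂_r F_r` is bounded by `M` in the
`L^p` space with weight `u` for `|r - 1| < δ`, and `F_r` is bounded by `(1 + r)^(-γ) M` in the `L^p`
space with weight `v`. The estimate holds in every weight dominated by `v` and by an interpolation
`u^θ v^(1 - θ)`. -/
structure IsPVFamily (μ : Measure Y) (p : ℝ≥0∞) (u v : Y → ℝ) (δ γ : ℝ) (M : ℝ≥0∞)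
    (F : ℝ → Y → E) : Prop where
  stronglyMeasurable : StronglyMeasurable (Function.uncurry F)
  contDiffOn : ∀ᵐ y ∂μ, ContDiffOn ℝ 1 (F · y) (ball 1 δ)
  eLpNorm_deriv_le : ∀ r ∈ ball 1 δ, eLpNorm (fun y => u y • deriv (F · y) r) p μ ≤ M
  eLpNorm_le : ∀ r, 0 < r →
    eLpNorm (fun y => v y • F r y) p μ ≤ ENNReal.ofReal ((1 + r) ^ (-γ)) * M

/-- A weight `w` to which bounds in the weights `u` and `v` pass by interpolation with exponent `θ`,
and which is also dominated by `v` itself. -/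
structure IsInterpolationWeight (θ : ℝ) (u v w : Y → ℝ) : Prop where
  exponent_pos : 0 < θ
  exponent_lt_one : θ < 1
  measurable_left : Measurable u
  measurable_right : Measurable v
  measurable : Measurable w
  ne_zero : ∀ y, w y ≠ 0
  abs_le_right : ∀ y, |w y| ≤ |v y|
  abs_le_rpow_mul_rpow : ∀ y, |w y| ≤ |u y| ^ θ * |v y| ^ (1 - θ)

lemma IsInterpolationWeight.norm_smul_le {θ : ℝ} {u v w : Y → ℝ}
    (hw : IsInterpolationWeight θ u v w) (y : Y) (x : E) :
    ‖w y • x‖ ≤ ‖u y • x‖ ^ θ * ‖v y • x‖ ^ (1 - θ) := by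
  simp only [norm_smul, Real.norm_eq_abs]
  rw [Real.mul_rpow (abs_nonneg _) (norm_nonneg _), Real.mul_rpow (abs_nonneg _) (norm_nonneg _),
    mul_mul_mul_comm, ← Real.rpow_add_of_nonneg (norm_nonneg _) hw.exponent_pos.le
    (sub_pos.2 hw.exponent_lt_one).le, add_sub_cancel, Real.rpow_one]
  exact mul_le_mul_of_nonneg_right (hw.abs_le_rpow_mul_rpow y) (norm_nonneg _)

lemma IsInterpolationWeight.eLpNorm_smul_le {μ : Measure Y} {θ : ℝ} {u v w : Y → ℝ}
    (hw : IsInterpolationWeight θ u v w) (p : ℝ≥0∞) (f : Y → E) :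
    eLpNorm (fun y => w y • f y) p μ ≤ eLpNorm (fun y => v y • f y) p μ :=
  eLpNorm_mono fun y => by
    simpa only [norm_smul, Real.norm_eq_abs] using
      mul_le_mul_of_nonneg_right (hw.abs_le_right y) (norm_nonneg _)

namespace IsPVFamily

variable {μ : Measure Y} {p M : ℝ≥0∞} {u v w : Y → ℝ} {δ γ θ e : ℝ} {F : ℝ → Y → E} {r : ℝ}

lemma stronglyMeasurable_apply (hF : IsPVFamily μ p u v δ γ M F) (r : ℝ) :
    StronglyMeasurable (F r) :=
  hF.stronglyMeasurable.comp_measurable measurable_prodMk_left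

lemma eLpNorm_smul_le (hF : IsPVFamily μ p u v δ γ M F) (hγ : 0 ≤ γ) (hr : 0 < r) :
    eLpNorm (fun y => v y • F r y) p μ ≤ M :=
  (hF.eLpNorm_le r hr).trans <| mul_le_of_le_one_left' <| ENNReal.ofReal_le_one.2 <|
    Real.rpow_le_one_of_one_le_of_nonpos (by linarith) (neg_nonpos.2 hγ)

lemma eLpNorm_smul_sub_le (hF : IsPVFamily μ p u v δ γ M F) (hp : 1 ≤ p) (hv : Measurable v)
    (hγ : 0 ≤ γ) (hr : 0 < r) : eLpNorm (fun y => v y • (F r y - F 1 y)) p μ ≤ 2 * M := by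
  have hmeas (s : ℝ) : AEStronglyMeasurable (fun y => v y • F s y) μ :=
    (hv.stronglyMeasurable.smul (hF.stronglyMeasurable_apply s)).aestronglyMeasurable
  simp only [smul_sub, two_mul]
  exact (eLpNorm_sub_le (hmeas r) (hmeas 1) hp).trans
    (add_le_add (hF.eLpNorm_smul_le hγ hr) (hF.eLpNorm_smul_le hγ one_pos))

lemma eLpNorm_smul_sub_le_of_mem_ball [SFinite μ] [CompleteSpace E]
    (hF : IsPVFamily μ p u v δ γ M F) (hp : 1 ≤ p) (hu : Measurable u) (hr : r ∈ ball 1 δ) :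
    eLpNorm (fun y => u y • (F r y - F 1 y)) p μ ≤ ENNReal.ofReal |1 - r| * M := by
  have hsub : uIcc 1 r ⊆ ball 1 δ :=
    (convex_ball (1 : ℝ) δ).ordConnected.uIcc_subset (mem_ball_self (pos_of_mem_ball hr)) hr
  have hmeas : StronglyMeasurable (Function.uncurry fun s y => u y • F s y) :=
    (hu.comp measurable_snd).stronglyMeasurable.smul hF.stronglyMeasurable
  simp only [smul_sub, abs_sub_comm 1 r]
  exact eLpNorm_sub_le_of_deriv hp hmeas isOpen_ball
    (hF.contDiffOn.mono fun y hy => contDiffOn_const.smul hy)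
    (fun s hs => by simpa only [deriv_fun_const_smul_field] using hF.eLpNorm_deriv_le s hs) hsub

lemma eLpNorm_smul_sub_le_rpow [SFinite μ] [CompleteSpace E] (hF : IsPVFamily μ p u v δ γ M F)
    (hw : IsInterpolationWeight θ u v w) (hp : 1 ≤ p) (hγ : 0 ≤ γ) (hr₀ : 0 < r)
    (hr : r ∈ ball 1 δ) :
    eLpNorm (fun y => w y • (F r y - F 1 y)) p μ ≤ ENNReal.ofReal (2 * |1 - r| ^ θ) * M := by
  have hθ₀ : 0 ≤ θ := hw.exponent_pos.le
  have hθ₁ : 0 ≤ 1 - θ := (sub_pos.2 hw.exponent_lt_one).le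
  have hD : StronglyMeasurable fun y => F r y - F 1 y :=
    (hF.stronglyMeasurable_apply r).sub (hF.stronglyMeasurable_apply 1)
  calc eLpNorm (fun y => w y • (F r y - F 1 y)) p μ
      ≤ eLpNorm (fun y => u y • (F r y - F 1 y)) p μ ^ θ *
          eLpNorm (fun y => v y • (F r y - F 1 y)) p μ ^ (1 - θ) :=
        eLpNorm_le_rpow_mul_rpow_of_norm_le hw.exponent_pos hw.exponent_lt_one p
          (hw.measurable_left.stronglyMeasurable.smul hD).aestronglyMeasurable
          (hw.measurable_right.stronglyMeasurable.smul hD).aestronglyMeasurable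
          (Eventually.of_forall fun y => hw.norm_smul_le y _)
    _ ≤ (ENNReal.ofReal |1 - r| * M) ^ θ * (2 * M) ^ (1 - θ) := by
        gcongr
        · exact hF.eLpNorm_smul_sub_le_of_mem_ball hp hw.measurable_left hr
        · exact hF.eLpNorm_smul_sub_le hp hw.measurable_right hγ hr₀
    _ = 2 ^ (1 - θ) * ENNReal.ofReal |1 - r| ^ θ * M := by
        rw [ENNReal.mul_rpow_of_nonneg _ _ hθ₀, ENNReal.mul_rpow_of_nonneg _ _ hθ₁,
          mul_mul_mul_comm, ← ENNReal.rpow_add_of_nonneg _ _ hθ₀ hθ₁, add_sub_cancel,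
          ENNReal.rpow_one, mul_comm (2 ^ (1 - θ))]
    _ ≤ 2 * ENNReal.ofReal |1 - r| ^ θ * M := by
        gcongr
        exact (ENNReal.rpow_le_rpow_of_exponent_le one_le_two (by linarith)).trans_eq
          (ENNReal.rpow_one 2)
    _ = ENNReal.ofReal (2 * |1 - r| ^ θ) * M := by
        rw [ENNReal.ofReal_mul zero_le_two, ENNReal.ofReal_ofNat,
          ENNReal.ofReal_rpow_of_nonneg (abs_nonneg _) hθ₀]

lemma eLpNorm_smul_pvIntegrand_le_of_mem_ball [SFinite μ] [CompleteSpace E]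
    (hF : IsPVFamily μ p u v δ γ M F) (hw : IsInterpolationWeight θ u v w) (hp : 1 ≤ p)
    (hγ : 0 ≤ γ) (heδ : e ≤ δ) (hr₀ : 0 < r) (hr₁ : r ≠ 1) (hr : r ∈ ball 1 e) :
    eLpNorm (fun y => w y • pvIntegrand 1 e (F · y) r) p μ ≤
      ENNReal.ofReal (pvMajorant e θ γ r) * M := by
  have hpos : 0 < |1 - r| := abs_pos.2 (sub_ne_zero.2 hr₁.symm)
  have hδ : r ∈ ball 1 δ := ball_subset_ball heδ hr
  simp only [pvIntegrand, indicator_of_mem hr, smul_comm (w _)]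
  calc eLpNorm (fun y => (1 - r)⁻¹ • w y • (F r y - F 1 y)) p μ
      = ENNReal.ofReal |1 - r|⁻¹ * eLpNorm (fun y => w y • (F r y - F 1 y)) p μ := by
        rw [← abs_inv, ← Real.enorm_eq_ofReal_abs]
        exact eLpNorm_const_smul _ _ p μ
    _ ≤ ENNReal.ofReal |1 - r|⁻¹ * (ENNReal.ofReal (2 * |1 - r| ^ θ) * M) := by
        gcongr
        exact hF.eLpNorm_smul_sub_le_rpow hw hp hγ hr₀ hδ
    _ = ENNReal.ofReal (2 * |1 - r| ^ (θ - 1)) * M := by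
        rw [← mul_assoc, ← ENNReal.ofReal_mul (by positivity), Real.rpow_sub_one hpos.ne']
        ring_nf
    _ ≤ ENNReal.ofReal (pvMajorant e θ γ r) * M := by
        gcongr
        exact le_pvMajorant_of_mem_ball (pos_of_mem_ball hr) hr₀ θ γ hr

lemma eLpNorm_smul_pvIntegrand_le_of_notMem_ball (hF : IsPVFamily μ p u v δ γ M F)
    (hw : IsInterpolationWeight θ u v w) (he : 0 < e) (hr₀ : 0 < r) (hr : r ∉ ball 1 e) :
    eLpNorm (fun y => w y • pvIntegrand 1 e (F · y) r) p μ ≤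
      ENNReal.ofReal (pvMajorant e θ γ r) * M := by
  simp only [pvIntegrand, indicator_of_notMem hr, sub_zero, smul_comm (w _)]
  calc eLpNorm (fun y => (1 - r)⁻¹ • w y • F r y) p μ
      = ENNReal.ofReal |1 - r|⁻¹ * eLpNorm (fun y => w y • F r y) p μ := by
        rw [← abs_inv, ← Real.enorm_eq_ofReal_abs]
        exact eLpNorm_const_smul _ _ p μ
    _ ≤ ENNReal.ofReal |1 - r|⁻¹ * (ENNReal.ofReal ((1 + r) ^ (-γ)) * M) := by
        gcongr
        exact (hw.eLpNorm_smul_le p _).trans (hF.eLpNorm_le r hr₀)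
    _ = ENNReal.ofReal (|1 - r|⁻¹ * (1 + r) ^ (-γ)) * M := by
        rw [← mul_assoc, ← ENNReal.ofReal_mul (by positivity)]
    _ ≤ ENNReal.ofReal (pvMajorant e θ γ r) * M := by
        gcongr
        exact le_pvMajorant_of_notMem_ball he hr₀ θ γ hr

lemma lintegral_eLpNorm_smul_pvIntegrand_le [SFinite μ] [CompleteSpace E]
    (hF : IsPVFamily μ p u v δ γ M F) (hw : IsInterpolationWeight θ u v w) (hp : 1 ≤ p)
    (hγ : 0 < γ) (he : 0 < e) (heδ : e ≤ δ) :
    ∫⁻ r in Ioi 0, eLpNorm (fun y => w y • pvIntegrand 1 e (F · y) r) p μ ≤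
      ENNReal.ofReal (∫ r in Ioi 0, pvMajorant e θ γ r) * M := by
  have hmaj : IntegrableOn (pvMajorant e θ γ) (Ioi 0) :=
    integrableOn_pvMajorant e hw.exponent_pos hγ
  have hslice : ∀ᵐ r ∂volume.restrict (Ioi 0),
      eLpNorm (fun y => w y • pvIntegrand 1 e (F · y) r) p μ ≤
        ENNReal.ofReal (pvMajorant e θ γ r) * M := by
    filter_upwards [ae_restrict_mem measurableSet_Ioi, ae_restrict_of_ae (Measure.ae_ne volume 1)]
      with r hr₀ hr₁
    by_cases hr : r ∈ ball 1 e
    · exact hF.eLpNorm_smul_pvIntegrand_le_of_mem_ball hw hp hγ.le heδ hr₀ hr₁ hr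
    · exact hF.eLpNorm_smul_pvIntegrand_le_of_notMem_ball hw he hr₀ hr
  calc ∫⁻ r in Ioi 0, eLpNorm (fun y => w y • pvIntegrand 1 e (F · y) r) p μ
      ≤ ∫⁻ r in Ioi 0, ENNReal.ofReal (pvMajorant e θ γ r) * M := lintegral_mono_ae hslice
    _ = ENNReal.ofReal (∫ r in Ioi 0, pvMajorant e θ γ r) * M := by
        rw [lintegral_mul_const'' _ hmaj.aestronglyMeasurable.aemeasurable.ennreal_ofReal,
          ofReal_integral_eq_lintegral_ofReal hmaj]
        filter_upwards [ae_restrict_mem measurableSet_Ioi] with r hr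
        exact pvMajorant_nonneg he hr θ γ

lemma stronglyMeasurable_uncurry_smul_pvIntegrand (hF : IsPVFamily μ p u v δ γ M F)
    (hw : Measurable w) (e : ℝ) :
    StronglyMeasurable (Function.uncurry fun r y => w y • pvIntegrand 1 e (F · y) r) := by
  have hF₁ : StronglyMeasurable fun z : ℝ × Y => (ball 1 e).indicator (fun _ => F 1 z.2) z.1 :=
    ((hF.stronglyMeasurable_apply 1).comp_measurable measurable_snd).indicator
      (measurable_fst measurableSet_ball)
  have hinv : Measurable fun z : ℝ × Y => (1 - z.1)⁻¹ := by fun_prop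
  exact (hw.comp measurable_snd).stronglyMeasurable.smul
    (hinv.stronglyMeasurable.smul (hF.stronglyMeasurable.sub hF₁))

lemma ae_integrableOn_pvIntegrand [SFinite μ] [CompleteSpace E]
    (hF : IsPVFamily μ p u v δ γ M F) (hw : IsInterpolationWeight θ u v w) (hM : M ≠ ∞)
    (hp : 1 ≤ p) (hγ : 0 < γ) (he : 0 < e) (heδ : e ≤ δ) :
    ∀ᵐ y ∂μ, IntegrableOn (pvIntegrand 1 e (F · y)) (Ioi 0) := by
  have hint := ae_integrable_of_lintegral_eLpNorm_ne_top hp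
    (hF.stronglyMeasurable_uncurry_smul_pvIntegrand hw.measurable e).aestronglyMeasurable
    (ne_top_of_le_ne_top (ENNReal.mul_ne_top ENNReal.ofReal_ne_top hM)
      (hF.lintegral_eLpNorm_smul_pvIntegrand_le hw hp hγ he heδ))
  exact hint.mono fun y hy => (integrable_fun_smul_iff (hw.ne_zero y) _).1 hy

lemma ae_tendsto_setIntegral [SFinite μ] [CompleteSpace E]
    (hF : IsPVFamily μ p u v δ γ M F) (hw : IsInterpolationWeight θ u v w) (hM : M ≠ ∞)
    (hp : 1 ≤ p) (hγ : 0 < γ) (he : 0 < e) (he₁ : e ≤ 1) (heδ : e ≤ δ) :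
    ∀ᵐ y ∂μ, Tendsto (fun ε => ∫ r in Ioi 0 \ closedBall 1 ε, (1 - r)⁻¹ • F r y)
      (nhdsWithin 0 (Ioi 0)) (nhds (∫ r in Ioi 0, pvIntegrand 1 e (F · y) r)) := by
  have hball : ball (1 : ℝ) e ⊆ Ioi 0 := fun r hr => by
    rw [Real.ball_eq_Ioo] at hr
    exact (sub_nonneg.2 he₁).trans_lt hr.1
  exact (hF.ae_integrableOn_pvIntegrand hw hM hp hγ he heδ).mono fun y hy =>
    tendsto_setIntegral_inv_sub_smul measurableSet_Ioi hball hy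

lemma eLpNorm_smul_setIntegral_pvIntegrand_le [SFinite μ] [CompleteSpace E]
    (hF : IsPVFamily μ p u v δ γ M F) (hw : IsInterpolationWeight θ u v w) (hp : 1 ≤ p)
    (hγ : 0 < γ) (he : 0 < e) (heδ : e ≤ δ) :
    eLpNorm (fun y => w y • ∫ r in Ioi 0, pvIntegrand 1 e (F · y) r) p μ ≤
      ENNReal.ofReal (∫ r in Ioi 0, pvMajorant e θ γ r) * M := by
  simp only [← integral_smul]
  exact (eLpNorm_integral_le hp
    (hF.stronglyMeasurable_uncurry_smul_pvIntegrand hw.measurable e).aestronglyMeasurable).trans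
    (hF.lintegral_eLpNorm_smul_pvIntegrand_le hw hp hγ he heδ)

end IsPVFamily

end Family

section WeightedEstimate

open Metric

lemma exists_mem_Ioo_le_mul_add_one_sub_mul {a b c : ℝ} (hab : a < b) :
    ∃ θ ∈ Ioo (0 : ℝ) 1, a ≤ θ * c + (1 - θ) * b := by
  have hlim : Tendsto (fun θ : ℝ => θ * c + (1 - θ) * b) (nhdsWithin 0 (Ioi 0)) (nhds b) :=
    ((by fun_prop : Continuous fun θ : ℝ => θ * c + (1 - θ) * b).tendsto' 0 b (by ring)).mono_left
      nhdsWithin_le_nhds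
  have hle : ∀ᶠ θ in nhdsWithin (0 : ℝ) (Ioi 0), a ≤ θ * c + (1 - θ) * b :=
    (hlim.eventually_const_lt hab).mono fun _ => le_of_lt
  exact ((eventually_mem_set.2 (Ioo_mem_nhdsGT one_pos)).and hle).exists

variable {Y E : Type*} [MeasurableSpace Y]

lemma isInterpolationWeight_rpow {J : Y → ℝ} (hJ : Measurable J) (hJ₁ : ∀ y, 1 ≤ J y)
    {θ a b c : ℝ} (hθ : θ ∈ Ioo 0 1) (hab : a ≤ b) (ha : a ≤ θ * c + (1 - θ) * b) :
    IsInterpolationWeight θ (fun y => J y ^ c) (fun y => J y ^ b) (fun y => J y ^ a) where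
  exponent_pos := hθ.1
  exponent_lt_one := hθ.2
  measurable_left := hJ.pow_const c
  measurable_right := hJ.pow_const b
  measurable := hJ.pow_const a
  ne_zero y := (Real.rpow_pos_of_pos (one_pos.trans_le (hJ₁ y)) a).ne'
  abs_le_right y := by
    have hJ₀ : 0 ≤ J y := zero_le_one.trans (hJ₁ y)
    simpa only [Real.abs_rpow_of_nonneg hJ₀, abs_of_nonneg hJ₀] using
      Real.rpow_le_rpow_of_exponent_le (hJ₁ y) hab
  abs_le_rpow_mul_rpow y := by
    have hJ₀ : 0 < J y := one_pos.trans_le (hJ₁ y)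
    simp only [abs_of_pos (Real.rpow_pos_of_pos hJ₀ _), ← Real.rpow_mul hJ₀.le,
      ← Real.rpow_add hJ₀]
    exact Real.rpow_le_rpow_of_exponent_le (hJ₁ y) (by linarith)

variable [NormedAddCommGroup E] [NormedSpace ℂ E] [CompleteSpace E]

lemma IsPVFamily.eLpNorm_smul_pi_mul_I_smul_add_le {μ : Measure Y} [SFinite μ] {p M : ℝ≥0∞}
    {u v w : Y → ℝ} {δ γ θ e : ℝ} {F : ℝ → Y → E} (hF : IsPVFamily μ p u v δ γ M F)
    (hw : IsInterpolationWeight θ u v w) (hp : 1 ≤ p) (hγ : 0 < γ) (he : 0 < e) (heδ : e ≤ δ) :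
    eLpNorm (fun y => w y • ((Real.pi * Complex.I : ℂ) • F 1 y +
        ∫ r in Ioi 0, pvIntegrand 1 e (F · y) r)) p μ ≤
      ENNReal.ofReal (Real.pi + ∫ r in Ioi 0, pvMajorant e θ γ r) * M := by
  have hF₁_meas : AEStronglyMeasurable (fun y => (Real.pi * Complex.I : ℂ) • w y • F 1 y) μ :=
    ((hw.measurable.stronglyMeasurable.smul
      (hF.stronglyMeasurable_apply 1)).const_smul _).aestronglyMeasurable
  have hP_meas :
      AEStronglyMeasurable (fun y => w y • ∫ r in Ioi 0, pvIntegrand 1 e (F · y) r) μ := by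
    simp only [← integral_smul]
    exact (hF.stronglyMeasurable_uncurry_smul_pvIntegrand hw.measurable
      e).integral_prod_left'.aestronglyMeasurable
  have hF₁ : eLpNorm (fun y => (Real.pi * Complex.I : ℂ) • w y • F 1 y) p μ ≤
      ENNReal.ofReal Real.pi * M :=
    calc eLpNorm (fun y => (Real.pi * Complex.I : ℂ) • w y • F 1 y) p μ
        = ENNReal.ofReal Real.pi * eLpNorm (fun y => w y • F 1 y) p μ := by
          refine (eLpNorm_const_smul _ _ p μ).trans ?_
          rw [enorm_mul, ← ofReal_norm, ← ofReal_norm, Complex.norm_I, Complex.norm_real,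
            Real.norm_of_nonneg Real.pi_nonneg, ENNReal.ofReal_one, mul_one]
      _ ≤ ENNReal.ofReal Real.pi * M := by
          gcongr
          exact (hw.eLpNorm_smul_le p _).trans (hF.eLpNorm_smul_le hγ.le one_pos)
  simp only [smul_add, smul_comm (w _) (Real.pi * Complex.I : ℂ)]
  rw [ENNReal.ofReal_add Real.pi_nonneg (setIntegral_pvMajorant_nonneg he θ γ), add_mul]
  exact (eLpNorm_add_le hF₁_meas hP_meas hp).trans
    (add_le_add hF₁ (hF.eLpNorm_smul_setIntegral_pvIntegrand_le hw hp hγ he heδ))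

lemma Ioi_sdiff_closedBall_one (ε : ℝ) :
    Ioi 0 \ closedBall 1 ε = {r : ℝ | 0 < r ∧ ε < |1 - r|} := by
  ext r
  simp [dist_comm r 1, Real.dist_eq]

theorem stmt3_general (μ : Measure Y) [SFinite μ] {J : Y → ℝ} (hJ : Measurable J)
    (hJ₁ : ∀ y, 1 ≤ J y) {p : ℝ≥0∞} (hp : 1 ≤ p) {α α' δ γ : ℝ} (τ : ℝ) (hδ : 0 < δ) (hγ : 0 < γ)
    (hα' : α' < α) :
    ∃ C : ℝ, 0 < C ∧ ∀ (M : ℝ) (F : ℝ → Y → E), StronglyMeasurable (Function.uncurry F) →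
      (∀ᵐ y ∂μ, ContDiffOn ℝ 1 (F · y) (Ioo (1 - δ) (1 + δ))) →
      (∀ r ∈ Ioo (1 - δ) (1 + δ),
        eLpNorm (fun y => J y ^ τ • deriv (F · y) r) p μ ≤ ENNReal.ofReal M) →
      (∀ r, 0 < r →
        eLpNorm (fun y => J y ^ α • F r y) p μ ≤ ENNReal.ofReal ((1 + r) ^ (-γ) * M)) →
      ∃ P : Y → E,
        (∀ᵐ y ∂μ, Tendsto
          (fun ε => ∫ r in {r : ℝ | 0 < r ∧ ε < |1 - r|}, (1 - r)⁻¹ • F r y)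
          (nhdsWithin 0 (Ioi 0)) (nhds (P y))) ∧
        eLpNorm (fun y => J y ^ α' • ((Real.pi * Complex.I : ℂ) • F 1 y + P y)) p μ ≤
          ENNReal.ofReal (C * M) := by
  obtain ⟨θ, hθ, hα'θ⟩ := exists_mem_Ioo_le_mul_add_one_sub_mul (c := τ) hα'
  have hw := isInterpolationWeight_rpow hJ hJ₁ hθ hα'.le hα'θ
  set e : ℝ := min δ 1
  have he : 0 < e := lt_min hδ one_pos
  have hC : 0 < Real.pi + ∫ r in Ioi 0, pvMajorant e θ γ r :=
    add_pos_of_pos_of_nonneg Real.pi_pos (setIntegral_pvMajorant_nonneg he θ γ)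
  refine ⟨_, hC, fun M F hF_meas hF_diff hF_deriv hF_decay =>
    ⟨fun y => ∫ r in Ioi 0, pvIntegrand 1 e (F · y) r, ?_⟩⟩
  rw [← Real.ball_eq_Ioo] at hF_diff hF_deriv
  have hF : IsPVFamily μ p (fun y => J y ^ τ) (fun y => J y ^ α) δ γ (ENNReal.ofReal M) F :=
    ⟨hF_meas, hF_diff, hF_deriv, fun r hr =>
      (hF_decay r hr).trans_eq (ENNReal.ofReal_mul (by positivity))⟩
  simp only [← Ioi_sdiff_closedBall_one, ENNReal.ofReal_mul hC.le]
  exact ⟨hF.ae_tendsto_setIntegral hw ENNReal.ofReal_ne_top hp hγ he (min_le_right δ 1)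
      (min_le_left δ 1),
    hF.eLpNorm_smul_pi_mul_I_smul_add_le hw hp hγ he (min_le_left δ 1)⟩

end WeightedEstimate

lemma measurable_jap (n : ℕ) : Measurable (jap : Euc n → ℝ) := by
  unfold jap
  fun_prop

lemma one_le_jap {n : ℕ} (x : Euc n) : 1 ≤ jap x :=
  Real.one_le_sqrt.2 (le_add_of_nonneg_right (sq_nonneg ‖x‖))

/-- the principal value estimate (Proposition on `(iπd + P)`). -/
theorem stmt3 (n : ℕ) (hn : 1 ≤ n) (p α δ τ γ : ℝ) (hp : 1 ≤ p)
    (hδ0 : 0 < δ) (hδ1 : δ < 1) (hγ : 0 < γ) (α' : ℝ) (hα' : α' < α) :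
    ∃ C₂ : ℝ, 0 < C₂ ∧
      ∀ M : ℝ, 0 < M →
      ∀ F : ℝ → Euc n → ℂ,
        Measurable (Function.uncurry F) →
        (∀ r : ℝ, 0 < r → LocallyIntegrable (F r) volume) →
        (∀ᵐ η ∂(volume : Measure (Euc n)),
          ContDiffOn ℝ 1 (fun r => F r η) (Set.Ioo (1 - δ) (1 + δ))) →
        (∀ r ∈ Set.Ioo (1 - δ) (1 + δ),
          eLpNorm (fun η : Euc n => (jap η ^ τ : ℝ) • deriv (fun s => F s η) r)
              (ENNReal.ofReal p) volume ≤ ENNReal.ofReal M) →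
        (∀ r : ℝ, 0 < r →
          eLpNorm (fun η : Euc n => (jap η ^ α : ℝ) • F r η) (ENNReal.ofReal p) volume
            ≤ ENNReal.ofReal ((1 + r) ^ (-γ) * M)) →
        ∃ P : Euc n → ℂ,
          (∀ᵐ η ∂(volume : Measure (Euc n)), Tendsto
              (fun ε : ℝ => ∫ r in {r : ℝ | 0 < r ∧ ε < |1 - r|},
                  F r η / ((1 - r : ℝ) : ℂ))
              (nhdsWithin 0 (Set.Ioi 0)) (nhds (P η))) ∧
          eLpNorm (fun η : Euc n => (jap η ^ α' : ℝ) •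
              ((Real.pi : ℂ) * Complex.I * F 1 η + P η)) (ENNReal.ofReal p) volume
            ≤ ENNReal.ofReal (C₂ * M) := by
  obtain ⟨C, hC, h⟩ := stmt3_general (E := ℂ) (volume : Measure (Euc n)) (measurable_jap n)
    one_le_jap (ENNReal.one_le_ofReal.2 hp) τ hδ0 hγ hα'
  exact ⟨C, hC, fun M _ F hF _ => by
    simpa only [smul_eq_mul, div_eq_inv_mul, ← Complex.ofReal_inv, Complex.real_smul] using
      h M F hF.stronglyMeasurable⟩
end
end
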